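/- arXiv:2511.13140 — 2 statements merged into one kernel-verified Lean document; each statement's English description precedes it below -/
import Mathlib

section
/- For every l ≥ 1, the complete cubic Halin graph G_l has star chromatic index exactly 5: G_l admits a star 5-edge coloring but admits no star 4-edge coloring. -/
/-- A star `k`-edge coloring of a simple graph `G`: a proper edge coloring with colors
`0, …, k-1` such that the edges of every path of length 4 and of every cycle of length 4
receive at least 3 distinct colors. -/
def IsStarEdgeColoring {V : Type*} (G : SimpleGraph V) (k : ℕ) (c : Sym2 V → ℕ) : Prop :=
  (∀ e ∈ G.edgeSet, c e < k) ∧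
  (∀ a b b' : V, G.Adj a b → G.Adj a b' → b ≠ b' → c s(a, b) ≠ c s(a, b')) ∧
  (∀ v0 v1 v2 v3 v4 : V, ([v0, v1, v2, v3, v4] : List V).Nodup →
    G.Adj v0 v1 → G.Adj v1 v2 → G.Adj v2 v3 → G.Adj v3 v4 →
    3 ≤ ({c s(v0, v1), c s(v1, v2), c s(v2, v3), c s(v3, v4)} : Finset ℕ).card) ∧
  (∀ v0 v1 v2 v3 : V, ([v0, v1, v2, v3] : List V).Nodup →
    G.Adj v0 v1 → G.Adj v1 v2 → G.Adj v2 v3 → G.Adj v3 v0 →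
    3 ≤ ({c s(v0, v1), c s(v1, v2), c s(v2, v3), c s(v3, v0)} : Finset ℕ).card)

/-- Vertices of the complete cubic Halin graph `G_l`: the root (`none`), and for
each `1 ≤ j ≤ l` the level-`j` vertices `some ⟨(a, bs), _⟩` with `a : Fin 3` and
`bs : List (Fin 2)` of length `j - 1` (so `bs.length < l`). -/
abbrev HalinVert (l : ℕ) := Option { p : Fin 3 × List (Fin 2) // p.2.length < l }

/-- The value of a binary string, most significant digit first. -/
def binVal (bs : List (Fin 2)) : ℕ := bs.foldl (fun n b => 2 * n + b.val) 0

/-- The position of a leaf `(a, bs)` in the lexicographic order of leaf indices. -/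
def leafIdx (l : ℕ) (p : Fin 3 × List (Fin 2)) : ℕ := p.1.val * 2 ^ (l - 1) + binVal p.2

/-- Base adjacency relation for `G_l`: the root is adjacent to the three level-1
vertices; every non-leaf vertex is adjacent to its two children (obtained by
appending an element of `Fin 2` to its index); and the leaves (whose index lists
have length `l - 1`) are joined in a cycle following the lexicographic order of
their indices. -/
def halinRel (l : ℕ) : HalinVert l → HalinVert l → Prop
  | none, some q => q.1.2 = []
  | some p, some q =>
      (∃ d : Fin 2, q.1.1 = p.1.1 ∧ q.1.2 = p.1.2 ++ [d]) ∨
      (p.1.2.length = l - 1 ∧ q.1.2.length = l - 1 ∧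
        (leafIdx l q.1 = leafIdx l p.1 + 1 ∨
          (leafIdx l p.1 = 3 * 2 ^ (l - 1) - 1 ∧ leafIdx l q.1 = 0)))
  | _, _ => False

/-- The complete cubic Halin graph `G_l`, whose characteristic tree is the complete
tree `T_l` with `l` levels. -/
def completeHalin (l : ℕ) : SimpleGraph (HalinVert l) := SimpleGraph.fromRel (halinRel l)

/-!
Lower bound: in a star 4-edge-coloring of a cubic graph, at most one color is missing at each
vertex. Suppose that the edge leading out of a triangle `abd` at `a` has color `i`. Its far end sees
one of the colors of `ab` and `ad`, so `i` is missing at `b` or at `d`, since otherwise a path or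
cycle of length 4 is bicolored. Hence the color of `bd` is missing at `a`, and likewise for the
other two vertices. The color not used on the triangle therefore occurs on all three edges leading
out of it, which contradicts the same observation.

Upper bound: reserve the color `0` for the cycle of leaves and color the tree with `1, 2, 3, 4` from
the top down, giving one child edge of each vertex the color missing at the parent of the vertex.
This excludes a bicolored path centered at the vertex through its parent and that child, and for the
other pairs of tree edges the star condition is a finite check. Seen from an ancestor three levels
up, the colors near the leaves only depend on the position modulo 16, which again leaves finitely
many cases. For at most three levels explicit colorings are given.
-/

/-! ### Star edge-colorings as a condition at each vertex -/

section StarEdgeColoring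

variable {V : Type*} {G : SimpleGraph V} {k : ℕ} {c : Sym2 V → ℕ}

/-- The set of colors on the edges of `G` at the vertex `v`. -/
def colorsAt (G : SimpleGraph V) (c : Sym2 V → ℕ) (v : V) : Set ℕ :=
  (fun w => c s(v, w)) '' G.neighborSet v

theorem apply_mk_swap (c : Sym2 V → ℕ) (v w : V) : c s(v, w) = c s(w, v) :=
  congrArg c Sym2.eq_swap

theorem mem_colorsAt_left {v w : V} (h : G.Adj v w) : c s(v, w) ∈ colorsAt G c v :=
  Set.mem_image_of_mem _ h

theorem mem_colorsAt_right {v w : V} (h : G.Adj v w) : c s(v, w) ∈ colorsAt G c w :=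
  Sym2.eq_swap ▸ mem_colorsAt_left h.symm

theorem three_le_card_iff_not_alternating {a b d e : ℕ} (hab : a ≠ b) (hbd : b ≠ d)
    (hde : d ≠ e) : 3 ≤ ({a, b, d, e} : Finset ℕ).card ↔ ¬ (a = d ∧ b = e) := by
  by_cases had : a = d <;> by_cases hbe : b = e <;> grind

theorem IsStarEdgeColoring.not_bicolored (hc : IsStarEdgeColoring G k c)
    {v x y : V} (hx : G.Adj v x) (hy : G.Adj v y) (hxy : x ≠ y) :
    ¬ (c s(v, y) ∈ colorsAt G c x ∧ c s(v, x) ∈ colorsAt G c y) := by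
  obtain ⟨-, hproper, hpath, hcycle⟩ := hc
  rintro ⟨⟨x', hx' : G.Adj x x', hcx : c s(x, x') = _⟩,
    ⟨y', hy' : G.Adj y y', hcy : c s(y, y') = _⟩⟩
  have hinj : ∀ {u w w'}, G.Adj u w → G.Adj u w' → c s(u, w) = c s(u, w') → w = w' :=
    fun hw hw' h => by_contra fun hne => hproper _ _ _ hw hw' hne h
  have hx'v : x' ≠ v := by
    rintro rfl
    exact hxy (hinj hx hy ((apply_mk_swap c _ _).trans hcx))
  have hy'v : y' ≠ v := by
    rintro rfl
    exact hxy (hinj hx hy ((apply_mk_swap c _ _).trans hcy).symm)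
  have hx'y : x' ≠ y := by
    rintro rfl
    exact hx.ne' (hinj hx'.symm hy.symm
      ((apply_mk_swap c _ _).trans (hcx.trans (apply_mk_swap c _ _))))
  have hy'x : y' ≠ x := by
    rintro rfl
    exact hy.ne' (hinj hy'.symm hx.symm
      ((apply_mk_swap c _ _).trans (hcy.trans (apply_mk_swap c _ _))))
  have hcard : ¬ 3 ≤ ({c s(x', x), c s(x, v), c s(v, y), c s(y, y')} : Finset ℕ).card := by
    rw [Sym2.eq_swap (a := x'), Sym2.eq_swap (a := x) (b := v), hcx, hcy]
    grind
  by_cases hends : x' = y'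
  · subst hends
    exact hcard (hcycle x' x v y (by simp [hx'.ne', hx'v, hx'y, hx.ne', hxy, hy.ne])
      hx'.symm hx.symm hy hy')
  · exact hcard (hpath x' x v y y' (by
      simp [hx'.ne', hx'v, hx'y, hends, hx.ne', hxy, hy'x.symm, hy.ne, hy'v.symm, hy'.ne])
      hx'.symm hx.symm hy hy')

theorem isStarEdgeColoring_of_forall_adj (hlt : ∀ e ∈ G.edgeSet, c e < k)
    (hstar : ∀ v x y, G.Adj v x → G.Adj v y → x ≠ y → c s(v, x) ≠ c s(v, y) ∧
      ¬ (c s(v, y) ∈ colorsAt G c x ∧ c s(v, x) ∈ colorsAt G c y)) :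
    IsStarEdgeColoring G k c := by
  have hproper : ∀ {v x y}, G.Adj x v → G.Adj v y → x ≠ y → c s(x, v) ≠ c s(v, y) :=
    fun hx hy hxy => Sym2.eq_swap ▸ (hstar _ _ _ hx.symm hy hxy).1
  have hwalk : ∀ {v0 v1 v2 v3 v4}, G.Adj v0 v1 → G.Adj v1 v2 → G.Adj v2 v3 → G.Adj v3 v4 →
      v0 ≠ v2 → v1 ≠ v3 → v2 ≠ v4 →
      3 ≤ ({c s(v0, v1), c s(v1, v2), c s(v2, v3), c s(v3, v4)} : Finset ℕ).card := by
    intro v0 v1 v2 v3 v4 h01 h12 h23 h34 n02 n13 n24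
    rw [three_le_card_iff_not_alternating (hproper h01 h12 n02) (hproper h12 h23 n13)
      (hproper h23 h34 n24)]
    rintro ⟨h0, h1⟩
    refine (hstar v2 v1 v3 h12.symm h23 n13).2 ⟨h0 ▸ mem_colorsAt_right h01, ?_⟩
    rw [Sym2.eq_swap, h1]
    exact mem_colorsAt_left h34
  refine ⟨hlt, fun v x y hx hy hxy => (hstar v x y hx hy hxy).1, ?_, ?_⟩
  · intro v0 v1 v2 v3 v4 hnodup h01 h12 h23 h34
    exact hwalk h01 h12 h23 h34 (by grind) (by grind) (by grind)
  · intro v0 v1 v2 v3 hnodup h01 h12 h23 h30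
    exact hwalk h01 h12 h23 h30 (by grind) (by grind) (by grind)

end StarEdgeColoring

/-! ### Cubic graphs with a triangle -/

namespace IsStarEdgeColoring

variable {V : Type*} {G : SimpleGraph V} {c : Sym2 V → ℕ}

theorem injOn_neighborSet {k : ℕ} (hc : IsStarEdgeColoring G k c) (v : V) :
    Set.InjOn (fun w => c s(v, w)) (G.neighborSet v) :=
  fun _ hx _ hy h => by_contra fun hxy => hc.2.1 v _ _ hx hy hxy h

theorem mem_colorsAt_or_mem_colorsAt (hc : IsStarEdgeColoring G 4 c) {v : V}
    (hv : 3 ≤ (G.neighborSet v).encard) {i j : ℕ} (hi : i < 4) (hj : j < 4) (hij : i ≠ j) :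
    i ∈ colorsAt G c v ∨ j ∈ colorsAt G c v := by
  by_contra! h
  have hsub : colorsAt G c v ⊆ ((Finset.range 4).erase i).erase j := by
    rintro _ ⟨w, hw, rfl⟩
    have hlt : c s(v, w) < 4 := hc.1 _ hw
    have hw' := mem_colorsAt_left (c := c) hw
    simp only [Finset.coe_erase, Finset.coe_range, Set.mem_sdiff, Set.mem_Iio,
      Set.mem_singleton_iff]
    exact ⟨⟨hlt, fun h' => h.1 (h' ▸ hw')⟩, fun h' => h.2 (h' ▸ hw')⟩
  have hcard := Set.encard_le_encard hsub
  rw [colorsAt, (hc.injOn_neighborSet v).encard_image, Set.encard_coe_eq_coe_finsetCard,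
    Finset.card_erase_of_mem (by simp [hj, hij.symm]), Finset.card_erase_of_mem (by simpa),
    Finset.card_range] at hcard
  exact absurd (hv.trans hcard) (by norm_num)

theorem notMem_colorsAt_or_notMem_colorsAt (hc : IsStarEdgeColoring G 4 c) {a a' b d : V}
    (ha' : 3 ≤ (G.neighborSet a').encard) (haa' : G.Adj a a') (hab : G.Adj a b)
    (had : G.Adj a d) (ha'b : a' ≠ b) (ha'd : a' ≠ d) (hbd : b ≠ d) :
    c s(a, a') ∉ colorsAt G c b ∨ c s(a, a') ∉ colorsAt G c d := by
  rcases hc.mem_colorsAt_or_mem_colorsAt ha' (hc.1 _ hab) (hc.1 _ had)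
    (hc.2.1 a b d hab had hbd) with h | h
  · exact .inl fun hb => hc.not_bicolored haa' hab ha'b ⟨h, hb⟩
  · exact .inr fun hd => hc.not_bicolored haa' had ha'd ⟨h, hd⟩

theorem opposite_notMem_colorsAt (hc : IsStarEdgeColoring G 4 c)
    (hG : ∀ v, 3 ≤ (G.neighborSet v).encard) {a b d : V} (hab : G.Adj a b) (had : G.Adj a d)
    (hbd : G.Adj b d) : c s(b, d) ∉ colorsAt G c a := by
  rintro ⟨a', haa', h : c s(a, a') = c s(b, d)⟩
  have ha'b : a' ≠ b := by
    rintro rfl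
    exact had.ne (hc.injOn_neighborSet a' hab.symm hbd ((apply_mk_swap c _ _).trans h))
  have ha'd : a' ≠ d := by
    rintro rfl
    exact hab.ne (hc.injOn_neighborSet a' had.symm hbd.symm
      ((apply_mk_swap c _ _).trans (h.trans (apply_mk_swap c _ _))))
  rcases hc.notMem_colorsAt_or_notMem_colorsAt (hG a') haa' hab had ha'b ha'd hbd.ne with hn | hn
  · exact hn (h ▸ mem_colorsAt_left hbd)
  · exact hn (h ▸ mem_colorsAt_right hbd)

end IsStarEdgeColoring

theorem not_isStarEdgeColoring_four_of_not_cliqueFree_three {V : Type*} {G : SimpleGraph V}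
    (hG : ∀ v, 3 ≤ (G.neighborSet v).encard) (htriangle : ¬ G.CliqueFree 3) (c : Sym2 V → ℕ) :
    ¬ IsStarEdgeColoring G 4 c := by
  classical
  intro hc
  obtain ⟨a, b, d, hab, had, hbd⟩ : ∃ a b d, G.Adj a b ∧ G.Adj a d ∧ G.Adj b d := by
    obtain ⟨s, hs⟩ := not_forall_not.1 htriangle
    obtain ⟨a, b, d, hab, had, hbd, -⟩ := SimpleGraph.is3Clique_iff.1 hs
    exact ⟨a, b, d, hab, had, hbd⟩
  obtain ⟨i, hi, hiab, hiad, hibd⟩ :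
      ∃ i < 4, i ≠ c s(a, b) ∧ i ≠ c s(a, d) ∧ i ≠ c s(b, d) := by
    obtain ⟨i, hi, hi'⟩ := Finset.exists_mem_notMem_of_card_lt_card
      (s := {c s(a, b), c s(a, d), c s(b, d)}) (t := Finset.range 4)
      (Finset.card_le_three.trans_lt (by simp))
    exact ⟨i, Finset.mem_range.1 hi, by simpa using hi'⟩
  have hsee : ∀ {u v w}, G.Adj u v → G.Adj u w → G.Adj v w → i ≠ c s(v, w) →
      i ∈ colorsAt G c u := fun {u v w} huv huw hvw hne =>
    (hc.mem_colorsAt_or_mem_colorsAt (hG u) hi (hc.1 _ hvw) hne).resolve_right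
      (hc.opposite_notMem_colorsAt hG huv huw hvw)
  obtain ⟨a', haa', rfl⟩ := hsee hab had hbd hibd
  have hb := hsee hab.symm hbd had hiad
  have hd := hsee had.symm hbd.symm hab hiab
  have ha'b : a' ≠ b := by rintro rfl; exact hiab rfl
  have ha'd : a' ≠ d := by rintro rfl; exact hiad rfl
  rcases hc.notMem_colorsAt_or_notMem_colorsAt (hG a') haa' hab had ha'b ha'd hbd.ne with hn | hn
  · exact hn hb
  · exact hn hd

/-! ### Colorings given at each vertex -/
/-- The star condition at one vertex: `col i` is the color of its `i`-th edge and `seen i` is a set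
containing the colors at the other end of that edge. -/
def IsStarAt {ι α : Type*} (col : ι → α) (seen : ι → Finset α) : Prop :=
  ∀ i j, i ≠ j → col i ≠ col j ∧ ¬ (col j ∈ seen i ∧ col i ∈ seen j)

instance {ι α : Type*} [Fintype ι] [DecidableEq ι] [DecidableEq α] (col : ι → α)
    (seen : ι → Finset α) : Decidable (IsStarAt col seen) :=
  inferInstanceAs (Decidable (∀ _ _, _))

theorem IsStarAt.mono {ι α : Type*} {col : ι → α} {seen seen' : ι → Finset α}
    (h : IsStarAt col seen') (hle : seen ≤ seen') : IsStarAt col seen :=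
  fun i j hij => ⟨(h i j hij).1, fun hmem => (h i j hij).2 ⟨hle i hmem.1, hle j hmem.2⟩⟩

section Ports

variable {V W ι : Type*} {G : SimpleGraph V} {f : V → W} {nbr : W → ι → W}

theorem exists_edgeColoring_of_ports (hadj : ∀ v w, G.Adj v w ↔ ∃ i, nbr (f v) i = f w)
    {col : W → ι → ℕ} (hcol : ∀ v w i j, nbr (f v) i = f w → nbr (f w) j = f v →
      col (f v) i = col (f w) j) :
    ∃ c : Sym2 V → ℕ, ∀ v w i, nbr (f v) i = f w → c s(v, w) = col (f v) i := by
  have hedge : ∀ e : Sym2 V, ∃ a, ∀ v w i, e = s(v, w) → nbr (f v) i = f w → a = col (f v) i := by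
    intro e
    by_cases he : ∃ v w i, e = s(v, w) ∧ nbr (f v) i = f w
    · obtain ⟨v, w, i, rfl, hi⟩ := he
      obtain ⟨j, hj⟩ := (hadj w v).1 ((hadj v w).2 ⟨i, hi⟩).symm
      refine ⟨col (f v) i, fun v' w' i' he hi' => ?_⟩
      rcases Sym2.eq_iff.1 he with ⟨rfl, rfl⟩ | ⟨rfl, rfl⟩
      · rw [hcol v w i j hi hj, hcol v w i' j hi' hj]
      · exact hcol v w i i' hi hi'
    · exact ⟨0, fun v w i hvw hi => absurd ⟨v, w, i, hvw, hi⟩ he⟩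
  choose c hc using hedge
  exact ⟨c, fun v w i hi => hc _ v w i rfl hi⟩

theorem exists_isStarEdgeColoring_of_ports [Fintype ι] {k : ℕ} (hf : f.Injective)
    (hadj : ∀ v w, G.Adj v w ↔ ∃ i, nbr (f v) i = f w) {col : W → ι → Fin k}
    (hcol : ∀ v w i j, nbr (f v) i = f w → nbr (f w) j = f v → col (f v) i = col (f w) j)
    (hstar : ∀ v, IsStarAt (col (f v)) fun i => Finset.univ.image (col (nbr (f v) i))) :
    ∃ c : Sym2 V → ℕ, IsStarEdgeColoring G k c := by
  obtain ⟨c, hc⟩ := exists_edgeColoring_of_ports hadj (col := fun w i => (col w i).val)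
    fun v w i j hi hj => congrArg Fin.val (hcol v w i j hi hj)
  have hseen : ∀ {v a}, a.val ∈ colorsAt G c v → a ∈ Finset.univ.image (col (f v)) := by
    rintro v a ⟨w, hw, ha : c s(v, w) = a⟩
    obtain ⟨i, hi⟩ := (hadj v w).1 hw
    exact Finset.mem_image.2 ⟨i, Finset.mem_univ i, Fin.ext ((hc v w i hi).symm.trans ha)⟩
  refine ⟨c, isStarEdgeColoring_of_forall_adj ?_ fun v x y hx hy hxy => ?_⟩
  · rintro ⟨v, w⟩ hvw
    obtain ⟨i, hi⟩ := (hadj v w).1 hvw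
    exact hc v w i hi ▸ (col (f v) i).isLt
  · obtain ⟨i, hi⟩ := (hadj v x).1 hx
    obtain ⟨j, hj⟩ := (hadj v y).1 hy
    have hij : i ≠ j := fun h => hxy (hf (by rw [← hi, ← hj, h]))
    have h := hstar v i j hij
    simp only [hi, hj] at h
    rw [hc v x i hi, hc v y j hj]
    exact ⟨Fin.val_injective.ne h.1, fun hmem => h.2 ⟨hseen hmem.1, hseen hmem.2⟩⟩

end Ports

/-! ### Heap numbering of the vertices -/

/-- The heap number of a vertex other than the root: the level-1 vertices have the numbers `3, 4, 5`
and the children of `n` have the numbers `2 * n` and `2 * n + 1`. -/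
def heapIdx (p : Fin 3 × List (Fin 2)) : ℕ :=
  p.2.foldl (fun n b => 2 * n + b.val) (3 + p.1.val)

/-- The heap numbering of all vertices, in which the root has the number `1`. With `L` leaves, these
are numbered `L, …, 2 * L - 1` in lexicographic order. -/
def heapNum {l : ℕ} : HalinVert l → ℕ
  | none => 1
  | some p => heapIdx p.1

theorem heapIdx_nil (a : Fin 3) : heapIdx (a, []) = 3 + a := rfl

theorem heapIdx_append (a : Fin 3) (bs : List (Fin 2)) (d : Fin 2) :
    heapIdx (a, bs ++ [d]) = 2 * heapIdx (a, bs) + d := by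
  simp [heapIdx]

theorem binVal_append (bs : List (Fin 2)) (d : Fin 2) :
    binVal (bs ++ [d]) = 2 * binVal bs + d := by
  simp [binVal]

theorem binVal_lt (bs : List (Fin 2)) : binVal bs < 2 ^ bs.length := by
  induction bs using List.reverseRecOn with
  | nil => simp [binVal]
  | append_singleton bs d ih =>
    rw [binVal_append, List.length_append, List.length_singleton, pow_succ]
    omega

theorem heapIdx_eq (a : Fin 3) (bs : List (Fin 2)) :
    heapIdx (a, bs) = (3 + a) * 2 ^ bs.length + binVal bs := by
  induction bs using List.reverseRecOn with
  | nil => simp [binVal, heapIdx]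
  | append_singleton bs d ih =>
    rw [binVal_append, List.length_append, List.length_singleton, pow_succ, heapIdx_append, ih]
    ring

theorem heapIdx_bounds (p : Fin 3 × List (Fin 2)) :
    3 * 2 ^ p.2.length ≤ heapIdx p ∧ heapIdx p < 6 * 2 ^ p.2.length := by
  obtain ⟨a, bs⟩ := p
  have h := binVal_lt bs
  rw [heapIdx_eq]
  have hlow := Nat.mul_le_mul_right (2 ^ bs.length) (show 3 ≤ 3 + a.val by omega)
  have hhigh := Nat.mul_le_mul_right (2 ^ bs.length) (show 3 + a.val ≤ 5 by omega)
  exact ⟨by linarith, by linarith⟩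

theorem three_le_heapIdx (p : Fin 3 × List (Fin 2)) : 3 ≤ heapIdx p := by
  have := (heapIdx_bounds p).1
  have : 0 < 2 ^ p.2.length := by positivity
  omega

theorem heapIdx_injective : Function.Injective heapIdx := by
  rintro ⟨a, bs⟩ ⟨a', bs'⟩ h
  induction bs using List.reverseRecOn generalizing bs' with
  | nil =>
    rcases bs'.eq_nil_or_concat with rfl | ⟨bs', d', rfl⟩
    · rw [heapIdx_nil, heapIdx_nil] at h
      rw [Fin.ext (by omega : a.val = a'.val)]
    · rw [heapIdx_nil, List.concat_eq_append, heapIdx_append] at h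
      have := three_le_heapIdx (a', bs')
      omega
  | append_singleton bs d ih =>
    rw [heapIdx_append] at h
    rcases bs'.eq_nil_or_concat with rfl | ⟨bs', d', rfl⟩
    · rw [heapIdx_nil] at h
      have := three_le_heapIdx (a, bs)
      omega
    · rw [List.concat_eq_append, heapIdx_append] at h
      have := ih bs' (by omega)
      rw [Prod.mk.injEq] at this
      rw [List.concat_eq_append, this.1, this.2, Fin.ext (by omega : d.val = d'.val)]

theorem exists_heapIdx_eq (n : ℕ) (hn : 3 ≤ n) : ∃ p, heapIdx p = n := by
  induction n using Nat.strong_induction_on with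
  | _ n ih =>
    by_cases h6 : n < 6
    · exact ⟨(⟨n - 3, by omega⟩, []), by rw [heapIdx_nil, Nat.add_sub_cancel' hn]⟩
    · obtain ⟨⟨a, bs⟩, hp⟩ := ih (n / 2) (by omega) (by omega)
      exact ⟨(a, bs ++ [⟨n % 2, by omega⟩]), by rw [heapIdx_append, hp, Nat.div_add_mod]⟩

/-- `n` is the heap number of a vertex of the complete cubic Halin graph with `L` leaves; the
numbers `0` and `2` are not used. -/
def IsHeapNum (L n : ℕ) : Prop := n = 1 ∨ 3 ≤ n ∧ n < 2 * L

instance (L n : ℕ) : Decidable (IsHeapNum L n) := inferInstanceAs (Decidable (_ ∨ _))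

/-- The number of leaves of `G_l`, which is also the heap number of its first leaf. -/
def numLeaves (l : ℕ) : ℕ := 3 * 2 ^ (l - 1)

theorem three_le_numLeaves (l : ℕ) : 3 ≤ numLeaves l :=
  Nat.le_mul_of_pos_right 3 (by positivity)

theorem two_mul_numLeaves {l : ℕ} (hl : 1 ≤ l) : 2 * numLeaves l = 3 * 2 ^ l := by
  rw [numLeaves, mul_left_comm, mul_pow_sub_one (by omega)]

theorem heapNum_injective {l : ℕ} : Function.Injective (heapNum (l := l)) := by
  rintro (_ | p) (_ | q) h
  · rfl
  · have : 1 = heapIdx q.1 := h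
    have := three_le_heapIdx q.1
    omega
  · have : heapIdx p.1 = 1 := h
    have := three_le_heapIdx p.1
    omega
  · rw [Subtype.ext (heapIdx_injective h)]

theorem length_eq_iff_le_heapIdx {l : ℕ} {p : Fin 3 × List (Fin 2)} (hp : p.2.length < l) :
    p.2.length = l - 1 ↔ numLeaves l ≤ heapIdx p := by
  constructor
  · intro h
    rw [numLeaves, ← h]
    exact (heapIdx_bounds p).1
  · intro h
    by_contra hne
    have h1 := (heapIdx_bounds p).2
    have h2 : 2 ^ (p.2.length + 1) ≤ 2 ^ (l - 1) := Nat.pow_le_pow_right (by omega) (by omega)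
    rw [pow_succ] at h2
    unfold numLeaves at h
    omega

theorem heapIdx_eq_numLeaves_add_leafIdx {l : ℕ} {p : Fin 3 × List (Fin 2)}
    (hp : p.2.length = l - 1) : heapIdx p = numLeaves l + leafIdx l p := by
  rw [heapIdx_eq, hp, leafIdx, numLeaves]
  ring

theorem isHeapNum_heapNum {l : ℕ} (v : HalinVert l) :
    IsHeapNum (numLeaves l) (heapNum v) := by
  rcases v with _ | ⟨p, hp⟩
  · exact Or.inl rfl
  · refine Or.inr ⟨three_le_heapIdx p, ?_⟩
    have h1 := (heapIdx_bounds p).2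
    have h2 : 2 ^ p.2.length ≤ 2 ^ (l - 1) := Nat.pow_le_pow_right (by omega) (by omega)
    simp only [heapNum, numLeaves]
    omega

theorem exists_heapNum_eq {l n : ℕ} (hl : 1 ≤ l) (hn : IsHeapNum (numLeaves l) n) :
    ∃ v : HalinVert l, heapNum v = n := by
  rcases hn with rfl | ⟨h3, hn⟩
  · exact ⟨none, rfl⟩
  · obtain ⟨p, rfl⟩ := exists_heapIdx_eq n h3
    refine ⟨some ⟨p, ?_⟩, rfl⟩
    rw [two_mul_numLeaves hl] at hn
    have h1 := (heapIdx_bounds p).1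
    exact (Nat.pow_lt_pow_iff_right (a := 2) (by omega)).1 (by omega)

/-- The heap number of the parent of the vertex with heap number `n ≥ 3`. -/
def heapParent (n : ℕ) : ℕ := if n < 6 then 1 else n / 2

/-- The relation `halinRel` in terms of heap numbers. -/
def HeapRel (L m n : ℕ) : Prop :=
  (3 ≤ n ∧ m = heapParent n) ∨ (L ≤ m ∧ L ≤ n ∧ (n = m + 1 ∨ (m + 1 = 2 * L ∧ n = L)))

theorem exists_append_singleton_iff_heapParent (p q : Fin 3 × List (Fin 2)) :
    (∃ d : Fin 2, q.1 = p.1 ∧ q.2 = p.2 ++ [d]) ↔ heapIdx p = heapParent (heapIdx q) := by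
  obtain ⟨a, bs⟩ := p
  obtain ⟨a', bs'⟩ := q
  have h3 := three_le_heapIdx (a, bs)
  rcases bs'.eq_nil_or_concat with rfl | ⟨bs', d', rfl⟩
  · have hne : heapIdx (a, bs) ≠ 1 := by omega
    rw [heapIdx_nil, heapParent, if_pos (by omega)]
    simp [hne]
  · have h3' := three_le_heapIdx (a', bs')
    rw [List.concat_eq_append, heapIdx_append, heapParent, if_neg (by omega),
      show (2 * heapIdx (a', bs') + d'.val) / 2 = heapIdx (a', bs') by omega,
      heapIdx_injective.eq_iff]
    simp only [Prod.mk.injEq, List.append_singleton_inj]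
    constructor
    · rintro ⟨d, rfl, rfl, rfl⟩
      exact ⟨rfl, rfl⟩
    · rintro ⟨rfl, rfl⟩
      exact ⟨d', rfl, rfl, rfl⟩

theorem eq_nil_iff_heapParent (q : Fin 3 × List (Fin 2)) :
    q.2 = [] ↔ 1 = heapParent (heapIdx q) := by
  obtain ⟨a, bs⟩ := q
  rcases bs.eq_nil_or_concat with rfl | ⟨bs, d, rfl⟩
  · rw [heapIdx_nil, heapParent, if_pos (by omega)]
    simp
  · have := three_le_heapIdx (a, bs)
    have hne : 1 ≠ (2 * heapIdx (a, bs) + d.val) / 2 := by omega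
    rw [List.concat_eq_append, heapIdx_append, heapParent, if_neg (by omega)]
    simp [hne]

theorem halinRel_iff {l : ℕ} (v w : HalinVert l) :
    halinRel l v w ↔ HeapRel (numLeaves l) (heapNum v) (heapNum w) := by
  have hL := three_le_numLeaves l
  rcases v with _ | ⟨p, hp⟩ <;> rcases w with _ | ⟨q, hq⟩
  · change False ↔ HeapRel _ 1 1
    rw [HeapRel, false_iff]
    omega
  · change q.2 = [] ↔ HeapRel _ 1 (heapIdx q)
    have := three_le_heapIdx q
    rw [eq_nil_iff_heapParent, HeapRel]
    omega
  · change False ↔ HeapRel _ (heapIdx p) 1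
    rw [HeapRel, false_iff]
    omega
  · have h3 := three_le_heapIdx q
    change _ ∨ _ ↔ HeapRel _ (heapIdx p) (heapIdx q)
    dsimp only
    rw [exists_append_singleton_iff_heapParent, length_eq_iff_le_heapIdx hp,
      length_eq_iff_le_heapIdx hq, HeapRel]
    have hnext (hp' : numLeaves l ≤ heapIdx p) (hq' : numLeaves l ≤ heapIdx q) :
        (leafIdx l q = leafIdx l p + 1 ∨ leafIdx l p = numLeaves l - 1 ∧ leafIdx l q = 0) ↔
          (heapIdx q = heapIdx p + 1 ∨
            heapIdx p + 1 = 2 * numLeaves l ∧ heapIdx q = numLeaves l) := by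
      have := heapIdx_eq_numLeaves_add_leafIdx ((length_eq_iff_le_heapIdx hp).2 hp')
      have := heapIdx_eq_numLeaves_add_leafIdx ((length_eq_iff_le_heapIdx hq).2 hq')
      omega
    rw [and_iff_right h3]
    exact or_congr_right (and_congr_right fun hp' => and_congr_right (hnext hp'))

/-- The neighbors, as heap numbers, of the vertex with heap number `n`. -/
def heapNeighbor (L n : ℕ) : Fin 3 → ℕ :=
  if n = 1 then ![3, 4, 5]
  else if n < L then ![heapParent n, 2 * n, 2 * n + 1]
  else ![heapParent n, if n = L then 2 * L - 1 else n - 1, if n + 1 = 2 * L then L else n + 1]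

/-- The colors of the edges from `n` to the vertices `heapNeighbor L n i`, if `up m` is the color of
the edge from `m` to its parent and `arc m` that of the edge from the leaf `m` to the next leaf. -/
def heapColor {α : Type*} (L : ℕ) (up arc : ℕ → α) (n : ℕ) : Fin 3 → α :=
  if n = 1 then ![up 3, up 4, up 5]
  else if n < L then ![up n, up (2 * n), up (2 * n + 1)]
  else ![up n, arc (if n = L then 2 * L - 1 else n - 1), arc n]

section HeapNeighbor

variable {L m n : ℕ}

theorem heapNeighbor_one : heapNeighbor L 1 = ![3, 4, 5] := by
  rw [heapNeighbor, if_pos rfl]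

theorem heapNeighbor_of_lt (hn : 3 ≤ n) (hnL : n < L) :
    heapNeighbor L n = ![heapParent n, 2 * n, 2 * n + 1] := by
  rw [heapNeighbor, if_neg (by omega), if_pos hnL]

theorem heapNeighbor_of_le (hn : 3 ≤ n) (hLn : L ≤ n) :
    heapNeighbor L n = ![heapParent n, if n = L then 2 * L - 1 else n - 1,
      if n + 1 = 2 * L then L else n + 1] := by
  rw [heapNeighbor, if_neg (by omega), if_neg hLn.not_gt]

theorem IsHeapNum.eq_one_or_lt_or_le (hn : IsHeapNum L n) :
    n = 1 ∨ (3 ≤ n ∧ n < L) ∨ (3 ≤ n ∧ L ≤ n ∧ n < 2 * L) := by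
  unfold IsHeapNum at hn
  omega

theorem exists_heapNeighbor_eq_iff (hL : 3 ≤ L) (hn : IsHeapNum L n) :
    (∃ i, heapNeighbor L n i = m) ↔ IsHeapNum L m ∧ n ≠ m ∧ (HeapRel L n m ∨ HeapRel L m n) := by
  rcases hn.eq_one_or_lt_or_le with rfl | ⟨h3, hnL⟩ | ⟨h3, hLn, hnL⟩
  · rw [heapNeighbor_one]
    simp only [Fin.exists_fin_succ, Fin.exists_fin_zero, Matrix.cons_val_zero, Matrix.cons_val_succ]
    unfold IsHeapNum HeapRel heapParent
    grind
  · rw [heapNeighbor_of_lt h3 hnL]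
    simp only [Fin.exists_fin_succ, Fin.exists_fin_zero, Matrix.cons_val_zero, Matrix.cons_val_succ]
    unfold IsHeapNum HeapRel heapParent
    grind
  · rw [heapNeighbor_of_le h3 hLn]
    simp only [Fin.exists_fin_succ, Fin.exists_fin_zero, Matrix.cons_val_zero, Matrix.cons_val_succ]
    unfold IsHeapNum HeapRel heapParent
    grind

theorem heapNeighbor_injective (hL : 3 ≤ L) (hn : IsHeapNum L n) :
    (heapNeighbor L n).Injective := by
  rw [← List.nodup_ofFn]
  rcases hn.eq_one_or_lt_or_le with rfl | ⟨h3, hnL⟩ | ⟨h3, hLn, -⟩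
  · rw [heapNeighbor_one]
    decide
  · rw [heapNeighbor_of_lt h3 hnL]
    unfold heapParent
    simp only [List.ofFn_succ, Matrix.cons_val_zero, Matrix.cons_val_succ, List.ofFn_zero]
    grind
  · rw [heapNeighbor_of_le h3 hLn]
    unfold heapParent
    simp only [List.ofFn_succ, Matrix.cons_val_zero, Matrix.cons_val_succ, List.ofFn_zero]
    grind

variable {α : Type*} {up arc : ℕ → α}

theorem heapColor_one : heapColor L up arc 1 = ![up 3, up 4, up 5] := by
  rw [heapColor, if_pos rfl]

theorem heapColor_of_lt (hn : 3 ≤ n) (hnL : n < L) :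
    heapColor L up arc n = ![up n, up (2 * n), up (2 * n + 1)] := by
  rw [heapColor, if_neg (by omega), if_pos hnL]

theorem heapColor_of_le (hn : 3 ≤ n) (hLn : L ≤ n) :
    heapColor L up arc n = ![up n, arc (if n = L then 2 * L - 1 else n - 1), arc n] := by
  rw [heapColor, if_neg (by omega), if_neg hLn.not_gt]

theorem heapColor_eq_ite (hL : 3 ≤ L) (hn : IsHeapNum L n) {i : Fin 3}
    (hi : heapNeighbor L n i = m) :
    heapColor L up arc n i = if m = heapParent n then up n else if n = heapParent m then up m
      else if m = n + 1 ∨ n + 1 = 2 * L ∧ m = L then arc n else arc m := by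
  subst hi
  rcases hn.eq_one_or_lt_or_le with rfl | ⟨h3, hnL⟩ | ⟨h3, hLn, -⟩
  · rw [heapColor_one, heapNeighbor_one]
    fin_cases i <;> rfl
  · rw [heapColor_of_lt h3 hnL, heapNeighbor_of_lt h3 hnL]
    unfold heapParent
    fin_cases i <;> simp only [Fin.zero_eta, Fin.mk_one, Fin.reduceFinMk, Matrix.cons_val] <;>
      grind
  · rw [heapColor_of_le h3 hLn, heapNeighbor_of_le h3 hLn]
    unfold heapParent
    fin_cases i <;> simp only [Fin.zero_eta, Fin.mk_one, Fin.reduceFinMk, Matrix.cons_val] <;>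
      grind

theorem heapColor_symm (hL : 3 ≤ L) (hn : IsHeapNum L n) (hm : IsHeapNum L m) {i j : Fin 3}
    (hi : heapNeighbor L n i = m) (hj : heapNeighbor L m j = n) :
    heapColor L up arc n i = heapColor L up arc m j := by
  obtain ⟨-, -, hnm⟩ := (exists_heapNeighbor_eq_iff hL hn).1 ⟨i, hi⟩
  rw [heapColor_eq_ite hL hn hi, heapColor_eq_ite hL hm hj]
  unfold HeapRel heapParent at *
  unfold IsHeapNum at hn hm
  grind

end HeapNeighbor

theorem completeHalin_adj_iff {l : ℕ} (v w : HalinVert l) :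
    (completeHalin l).Adj v w ↔ ∃ i, heapNeighbor (numLeaves l) (heapNum v) i = heapNum w := by
  rw [exists_heapNeighbor_eq_iff (three_le_numLeaves l) (isHeapNum_heapNum v), completeHalin,
    SimpleGraph.fromRel_adj, halinRel_iff, halinRel_iff, heapNum_injective.ne_iff,
    and_iff_right (isHeapNum_heapNum w)]

theorem encard_neighborSet_completeHalin {l : ℕ} (hl : 1 ≤ l) (v : HalinVert l) :
    ((completeHalin l).neighborSet v).encard = 3 := by
  have hL := three_le_numLeaves l
  have hv := isHeapNum_heapNum v
  have himage : heapNum '' (completeHalin l).neighborSet v =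
      Set.range (heapNeighbor (numLeaves l) (heapNum v)) := by
    ext m
    constructor
    · rintro ⟨w, hw, rfl⟩
      exact (completeHalin_adj_iff v w).1 hw
    · rintro ⟨i, hi⟩
      obtain ⟨w, rfl⟩ := exists_heapNum_eq hl ((exists_heapNeighbor_eq_iff hL hv).1 ⟨i, hi⟩).1
      exact ⟨w, (completeHalin_adj_iff v w).2 ⟨i, hi⟩, rfl⟩
  rw [← heapNum_injective.encard_image, himage, ← Set.image_univ,
    (heapNeighbor_injective hL hv).encard_image]
  simp

theorem heapParent_lt {n : ℕ} (hn : 2 ≤ n) : heapParent n < n := by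
  unfold heapParent
  split_ifs <;> omega

theorem heapParent_numLeaves_add_one (l : ℕ) :
    heapParent (numLeaves l + 1) = heapParent (numLeaves l) := by
  rcases le_or_gt l 1 with hl | hl
  · rw [numLeaves, Nat.sub_eq_zero_of_le hl]
    rfl
  · have heven : 2 ∣ numLeaves l := (dvd_pow_self 2 (by omega)).mul_left 3
    unfold heapParent
    split_ifs <;> omega

theorem not_cliqueFree_three_completeHalin {l : ℕ} (hl : 1 ≤ l) :
    ¬ (completeHalin l).CliqueFree 3 := by
  classical
  have hL := three_le_numLeaves l
  have hadj : ∀ v w : HalinVert l, heapNum v < heapNum w →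
      HeapRel (numLeaves l) (heapNum v) (heapNum w) → (completeHalin l).Adj v w :=
    fun v w hlt h => ⟨fun heq => hlt.ne (congrArg heapNum heq), .inl ((halinRel_iff v w).2 h)⟩
  obtain ⟨a, ha⟩ := exists_heapNum_eq hl (n := numLeaves l) (.inr ⟨hL, by omega⟩)
  obtain ⟨b, hb⟩ := exists_heapNum_eq hl (n := numLeaves l + 1) (.inr ⟨by omega, by omega⟩)
  obtain ⟨p, hp⟩ := exists_heapNum_eq hl (n := heapParent (numLeaves l))
    (by unfold heapParent IsHeapNum; split_ifs <;> omega)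
  have hlt := heapParent_lt (n := numLeaves l) (by omega)
  refine fun hfree => hfree {p, a, b} (SimpleGraph.is3Clique_triple_iff.2 ⟨?_, ?_, ?_⟩)
  · exact hadj p a (by omega) (.inl ⟨by omega, by rw [hp, ha]⟩)
  · exact hadj p b (by omega) (.inl ⟨by omega, by rw [hp, hb, heapParent_numLeaves_add_one]⟩)
  · exact hadj a b (by omega) (.inr ⟨by omega, by omega, by omega⟩)

theorem exists_isStarEdgeColoring_completeHalin {l k : ℕ} (up arc : ℕ → Fin k)
    (hstar : ∀ n, IsHeapNum (numLeaves l) n → IsStarAt (heapColor (numLeaves l) up arc n)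
      fun i => Finset.univ.image
        (heapColor (numLeaves l) up arc (heapNeighbor (numLeaves l) n i))) :
    ∃ c : Sym2 (HalinVert l) → ℕ, IsStarEdgeColoring (completeHalin l) k c :=
  exists_isStarEdgeColoring_of_ports heapNum_injective completeHalin_adj_iff
    (fun v w _ _ hi hj => heapColor_symm (three_le_numLeaves l) (isHeapNum_heapNum v)
      (isHeapNum_heapNum w) hi hj)
    fun v => hstar _ (isHeapNum_heapNum v)

/-! ### At most three levels -/

theorem exists_isStarEdgeColoring_completeHalin_of_list {l k : ℕ} [NeZero k] (up arc : List (Fin k))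
    (hstar : ∀ n < 2 * numLeaves l, IsHeapNum (numLeaves l) n →
      let color := heapColor (numLeaves l) (fun m => up.getD (m - 3) 0)
        fun m => arc.getD (m - numLeaves l) 0
      IsStarAt (color n) fun i => Finset.univ.image (color (heapNeighbor (numLeaves l) n i))) :
    ∃ c : Sym2 (HalinVert l) → ℕ, IsStarEdgeColoring (completeHalin l) k c := by
  have hL := three_le_numLeaves l
  refine exists_isStarEdgeColoring_completeHalin _ _ fun n hn => hstar n ?_ hn
  unfold IsHeapNum at hn
  omega

theorem exists_isStarEdgeColoring_completeHalin_one :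
    ∃ c : Sym2 (HalinVert 1) → ℕ, IsStarEdgeColoring (completeHalin 1) 5 c :=
  exists_isStarEdgeColoring_completeHalin_of_list [0, 2, 3] [1, 0, 4] (by decide +kernel)

theorem exists_isStarEdgeColoring_completeHalin_two :
    ∃ c : Sym2 (HalinVert 2) → ℕ, IsStarEdgeColoring (completeHalin 2) 5 c :=
  exists_isStarEdgeColoring_completeHalin_of_list [0, 1, 2, 1, 3, 2, 3, 4, 3]
    [2, 0, 4, 1, 0, 4] (by decide +kernel)

theorem exists_isStarEdgeColoring_completeHalin_three :
    ∃ c : Sym2 (HalinVert 3) → ℕ, IsStarEdgeColoring (completeHalin 3) 5 c :=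
  exists_isStarEdgeColoring_completeHalin_of_list
    [0, 1, 2, 1, 2, 2, 3, 3, 4, 2, 3, 4, 3, 4, 3, 0, 4, 0, 2, 0, 1]
    [0, 1, 0, 2, 0, 1, 2, 3, 1, 4, 3, 4] (by decide +kernel)

/-! ### At least four levels -/

/-- The permutation turning the palette of `n / 2` into that of its child `n`. The outer child of a
vertex is the child on the same side as the vertex itself; on the edge to its own outer child, every
vertex uses the color missing at its parent. -/
def paletteStep (n : ℕ) : Equiv.Perm (Fin 4) :=
  if n % 2 = n / 2 % 2 then c[0, 1, 3, 2] else c[0, 2, 1, 3]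

/-- The palette of the inner vertex `n`: its values at `0, 1, 2, 3` are the colors of the edges to
the parent, the outer child and the inner child, and the color missing at `n`. These are the colors
`1, …, 4` of a coloring with values in `Fin 5`, lowered by one; the tree edges avoid the color
`0`. -/
def palette (n : ℕ) : Equiv.Perm (Fin 4) :=
  if n < 6 then c[0, 1, 2] ^ n * c[1, 3, 2] else palette (n / 2) * paletteStep n

/-- The color of the edge from `n` to its parent. -/
def treeColor (n : ℕ) : Fin 5 := (palette n 0).succ

/-- The color of the edge from the leaf `n` with palette `s` to the next leaf: the color `0`, or one
that `s` provides for an edge to a child. The residues were found by a search for a rule under which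
the star condition holds at every leaf and at every parent of a leaf. -/
def arcColorOfPalette (s : Equiv.Perm (Fin 4)) (n : ℕ) : Fin 5 :=
  if n % 8 = 2 ∨ n % 8 = 4 ∨ n % 8 = 7 then 0
  else (s (if n % 2 = 0 ∨ n % 16 = 3 then 1 else 2)).succ

/-- The color of the edge from the leaf `n` to the next leaf. -/
def arcColor (n : ℕ) : Fin 5 := arcColorOfPalette (palette n) n

/-- The colors at the inner vertex `n` with palette `s`, in the order of `heapNeighbor`. -/
def innerColor (s : Equiv.Perm (Fin 4)) (n : ℕ) : Fin 3 → Fin 5 :=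
  if n % 2 = 0 then ![(s 0).succ, (s 1).succ, (s 2).succ] else ![(s 0).succ, (s 2).succ, (s 1).succ]

/-- The palette of the vertex `n` whose third ancestor has palette `s`. -/
def paletteBelow (s : Equiv.Perm (Fin 4)) (n : ℕ) : Equiv.Perm (Fin 4) :=
  s * paletteStep (n / 4) * paletteStep (n / 2) * paletteStep n

/-- The colors at the leaf `n` whose third ancestor has palette `s`, in the order of `heapNeighbor`.
As this only depends on `n` modulo `16`, the leaf `n + 15` stands for the preceding one. -/
def leafColor (s : Equiv.Perm (Fin 4)) (n : ℕ) : Fin 3 → Fin 5 :=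
  ![(paletteBelow s n 0).succ, arcColorOfPalette (paletteBelow s (n + 15)) (n + 15),
    arcColorOfPalette (paletteBelow s n) n]

/-- A set of colors containing those at each neighbor of the leaf `n` whose third ancestor has
palette `s`. -/
def leafSeen (s : Equiv.Perm (Fin 4)) (n : ℕ) : Fin 3 → Finset (Fin 5) :=
  ![{0, (paletteBelow s n 1).succ}ᶜ,
    if n % 8 = 0 then Finset.univ else Finset.univ.image (leafColor s (n + 15)),
    if n % 8 = 7 then Finset.univ else Finset.univ.image (leafColor s (n + 1))]

theorem palette_of_lt_six {n : ℕ} (hn : n < 6) : palette n = c[0, 1, 2] ^ n * c[1, 3, 2] := by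
  rw [palette, if_pos hn]

theorem palette_of_six_le {n : ℕ} (hn : 6 ≤ n) : palette n = palette (n / 2) * paletteStep n := by
  rw [palette, if_neg hn.not_gt]

theorem palette_two_mul {n : ℕ} (hn : 3 ≤ n) :
    palette (2 * n) = palette n * paletteStep (2 * n) := by
  rw [palette_of_six_le (by omega), Nat.mul_div_cancel_left n two_pos]

theorem palette_two_mul_add_one {n : ℕ} (hn : 3 ≤ n) :
    palette (2 * n + 1) = palette n * paletteStep (2 * n + 1) := by
  rw [palette_of_six_le (by omega), show (2 * n + 1) / 2 = n by omega]

theorem palette_eq_mul_mul {n : ℕ} (hn : 12 ≤ n) :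
    palette n = palette (n / 4) * paletteStep (n / 2) * paletteStep n := by
  rw [palette_of_six_le (by omega), palette_of_six_le (by omega), Nat.div_div_eq_div_mul]

theorem palette_eq_paletteBelow {n : ℕ} (hn : 24 ≤ n) :
    palette n = paletteBelow (palette (n / 8)) n := by
  rw [palette_of_six_le (by omega), palette_eq_mul_mul (by omega), Nat.div_div_eq_div_mul,
    Nat.div_div_eq_div_mul, paletteBelow]

theorem paletteStep_congr {m n : ℕ} (h : m % 4 = n % 4) : paletteStep m = paletteStep n := by
  rw [paletteStep, paletteStep, show m % 2 = n % 2 by omega, show m / 2 % 2 = n / 2 % 2 by omega]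

theorem innerColor_congr (s : Equiv.Perm (Fin 4)) {m n : ℕ} (h : m % 2 = n % 2) :
    innerColor s m = innerColor s n := by
  rw [innerColor, innerColor, h]

theorem paletteBelow_congr (s : Equiv.Perm (Fin 4)) {m n : ℕ} (h : m % 16 = n % 16) :
    paletteBelow s m = paletteBelow s n := by
  rw [paletteBelow, paletteBelow, paletteStep_congr (m := m / 4) (n := n / 4) (by omega),
    paletteStep_congr (m := m / 2) (n := n / 2) (by omega),
    paletteStep_congr (m := m) (n := n) (by omega)]

theorem arcColorOfPalette_congr (s : Equiv.Perm (Fin 4)) {m n : ℕ} (h : m % 16 = n % 16) :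
    arcColorOfPalette s m = arcColorOfPalette s n := by
  rw [arcColorOfPalette, arcColorOfPalette, h, show m % 8 = n % 8 by omega,
    show m % 2 = n % 2 by omega]

theorem leafColor_congr (s : Equiv.Perm (Fin 4)) {m n : ℕ} (h : m % 16 = n % 16) :
    leafColor s m = leafColor s n := by
  have h' : (m + 15) % 16 = (n + 15) % 16 := by omega
  rw [leafColor, leafColor, paletteBelow_congr s h, paletteBelow_congr s h',
    arcColorOfPalette_congr _ h, arcColorOfPalette_congr _ h']

theorem leafSeen_congr (s : Equiv.Perm (Fin 4)) {m n : ℕ} (h : m % 16 = n % 16) :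
    leafSeen s m = leafSeen s n := by
  rw [leafSeen, leafSeen, paletteBelow_congr s h, show m % 8 = n % 8 by omega,
    leafColor_congr s (m := m + 15) (n := n + 15) (by omega),
    leafColor_congr s (m := m + 1) (n := n + 1) (by omega)]

theorem image_innerColor (s : Equiv.Perm (Fin 4)) (n : ℕ) :
    Finset.univ.image (innerColor s n) = {0, (s 3).succ}ᶜ := by
  have hmod : ∀ s : Equiv.Perm (Fin 4), ∀ r < 2,
      Finset.univ.image (innerColor s r) = {0, (s 3).succ}ᶜ := by decide
  rw [innerColor_congr s (Nat.mod_mod n 2).symm]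
  exact hmod s _ (Nat.mod_lt n two_pos)

theorem innerColor_eq (s : Equiv.Perm (Fin 4)) (n : ℕ) :
    innerColor s n = ![(s 0).succ, ((s * paletteStep (2 * n)) 0).succ,
      ((s * paletteStep (2 * n + 1)) 0).succ] := by
  have hmod : ∀ s : Equiv.Perm (Fin 4), ∀ r < 2, innerColor s r = ![(s 0).succ,
      ((s * paletteStep (2 * r)) 0).succ, ((s * paletteStep (2 * r + 1)) 0).succ] := by decide
  rw [innerColor_congr s (Nat.mod_mod n 2).symm, hmod s _ (Nat.mod_lt n two_pos),
    paletteStep_congr (show 2 * n % 4 = 2 * (n % 2) % 4 by omega),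
    paletteStep_congr (show (2 * n + 1) % 4 = (2 * (n % 2) + 1) % 4 by omega)]

theorem isStarAt_innerColor (s : Equiv.Perm (Fin 4)) (n : ℕ) :
    IsStarAt (innerColor s n) ![{0, (s 1).succ}ᶜ, {0, ((s * paletteStep (2 * n)) 3).succ}ᶜ,
      {0, ((s * paletteStep (2 * n + 1)) 3).succ}ᶜ] := by
  have hmod : ∀ s : Equiv.Perm (Fin 4), ∀ r < 2, IsStarAt (innerColor s r) ![{0, (s 1).succ}ᶜ,
      {0, ((s * paletteStep (2 * r)) 3).succ}ᶜ,
      {0, ((s * paletteStep (2 * r + 1)) 3).succ}ᶜ] := by decide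
  rw [innerColor_congr s (Nat.mod_mod n 2).symm,
    paletteStep_congr (show 2 * n % 4 = 2 * (n % 2) % 4 by omega),
    paletteStep_congr (show (2 * n + 1) % 4 = (2 * (n % 2) + 1) % 4 by omega)]
  exact hmod s _ (Nat.mod_lt n two_pos)

theorem isStarAt_innerColor_of_leafColor (s : Equiv.Perm (Fin 4)) (n : ℕ) :
    IsStarAt (innerColor (s * paletteStep (n / 2) * paletteStep n) n)
      ![{0, ((s * paletteStep (n / 2) * paletteStep n) 1).succ}ᶜ,
        Finset.univ.image (leafColor s (2 * n)), Finset.univ.image (leafColor s (2 * n + 1))] := by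
  have hmod : ∀ s : Equiv.Perm (Fin 4), ∀ r < 8,
      IsStarAt (innerColor (s * paletteStep (r / 2) * paletteStep r) r)
        ![{0, ((s * paletteStep (r / 2) * paletteStep r) 1).succ}ᶜ,
          Finset.univ.image (leafColor s (2 * r)),
          Finset.univ.image (leafColor s (2 * r + 1))] := by decide +kernel
  rw [innerColor_congr _ (show n % 2 = n % 8 % 2 by omega),
    paletteStep_congr (show n / 2 % 4 = n % 8 / 2 % 4 by omega),
    paletteStep_congr (show n % 4 = n % 8 % 4 by omega),
    leafColor_congr s (show 2 * n % 16 = 2 * (n % 8) % 16 by omega),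
    leafColor_congr s (show (2 * n + 1) % 16 = (2 * (n % 8) + 1) % 16 by omega)]
  exact hmod s _ (Nat.mod_lt n (by norm_num))

theorem isStarAt_leafColor (s : Equiv.Perm (Fin 4)) (n : ℕ) :
    IsStarAt (leafColor s n) (leafSeen s n) := by
  have hmod : ∀ s : Equiv.Perm (Fin 4), ∀ r < 16, IsStarAt (leafColor s r) (leafSeen s r) := by
    decide +kernel
  rw [leafColor_congr s (Nat.mod_mod n 16).symm, leafSeen_congr s (Nat.mod_mod n 16).symm]
  exact hmod s _ (Nat.mod_lt n (by norm_num))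

theorem heapColor_eq_innerColor {L n : ℕ} (hn : 3 ≤ n) (hnL : n < L) :
    heapColor L treeColor arcColor n = innerColor (palette n) n := by
  rw [heapColor_of_lt hn hnL, innerColor_eq, ← palette_two_mul hn, ← palette_two_mul_add_one hn]
  rfl

theorem heapColor_eq_leafColor {L n : ℕ} (hL8 : 8 ∣ L) (hL : 24 ≤ L) (hLn : L ≤ n) :
    heapColor L treeColor arcColor n = leafColor (palette (n / 8)) n := by
  have hprev : arcColor (if n = L then 2 * L - 1 else n - 1) =
      arcColorOfPalette (paletteBelow (palette (n / 8)) (n + 15)) (n + 15) := by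
    by_cases hn : n % 8 = 0
    · rw [arcColor, arcColorOfPalette, arcColorOfPalette, if_pos (by grind), if_pos (by omega)]
    · rw [if_neg (by omega), arcColor, palette_eq_paletteBelow (by omega),
        show (n - 1) / 8 = n / 8 by omega,
        paletteBelow_congr _ (m := n - 1) (n := n + 15) (by omega),
        arcColorOfPalette_congr _ (m := n - 1) (n := n + 15) (by omega)]
  rw [heapColor_of_le (by omega) hLn, hprev, treeColor, arcColor,
    palette_eq_paletteBelow (by omega), leafColor]

theorem image_heapColor_one {L : ℕ} :
    Finset.univ.image (heapColor L treeColor arcColor 1) = {0, 4}ᶜ := by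
  rw [heapColor_one]
  simp only [treeColor, palette_of_lt_six (n := 3) (by norm_num),
    palette_of_lt_six (n := 4) (by norm_num), palette_of_lt_six (n := 5) (by norm_num)]
  decide

theorem image_heapColor_heapParent {L n : ℕ} (hn : 3 ≤ n) (hnL : n < 2 * L) :
    Finset.univ.image (heapColor L treeColor arcColor (heapParent n)) =
      {0, (palette n 1).succ}ᶜ := by
  unfold heapParent
  split_ifs with h6
  · rw [image_heapColor_one, palette_of_lt_six h6]
    interval_cases n <;> decide
  · have hstep : paletteStep n 1 = 3 := by
      unfold paletteStep
      split_ifs <;> decide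
    rw [heapColor_eq_innerColor (by omega) (by omega), image_innerColor,
      palette_of_six_le (not_lt.1 h6), Equiv.Perm.mul_apply, hstep]

theorem isStarAt_heapColor_one {L : ℕ} (hL : 6 ≤ L) :
    IsStarAt (heapColor L treeColor arcColor 1) fun i =>
      Finset.univ.image (heapColor L treeColor arcColor (heapNeighbor L 1 i)) := by
  have hstar : IsStarAt ![treeColor 3, treeColor 4, treeColor 5]
      ![{0, (palette 3 3).succ}ᶜ, {0, (palette 4 3).succ}ᶜ, {0, (palette 5 3).succ}ᶜ] := by
    simp only [treeColor, palette_of_lt_six (n := 3) (by norm_num),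
      palette_of_lt_six (n := 4) (by norm_num), palette_of_lt_six (n := 5) (by norm_num)]
    decide
  have hseen : ∀ n, 3 ≤ n → n < L → Finset.univ.image (heapColor L treeColor arcColor n) =
      {0, (palette n 3).succ}ᶜ := fun n h3 hnL => by
    rw [heapColor_eq_innerColor h3 hnL, image_innerColor]
  rw [heapColor_one, heapNeighbor_one]
  refine hstar.mono fun i => ?_
  fin_cases i
  · exact (hseen 3 (by omega) (by omega)).le
  · exact (hseen 4 (by omega) (by omega)).le
  · exact (hseen 5 (by omega) (by omega)).le

theorem isStarAt_heapColor_of_lt {L n : ℕ} (hn : 3 ≤ n) (hnL : 2 * n + 1 < L) :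
    IsStarAt (heapColor L treeColor arcColor n) fun i =>
      Finset.univ.image (heapColor L treeColor arcColor (heapNeighbor L n i)) := by
  rw [heapColor_eq_innerColor hn (by omega), heapNeighbor_of_lt hn (by omega)]
  refine (isStarAt_innerColor (palette n) n).mono fun i => ?_
  rw [← palette_two_mul hn, ← palette_two_mul_add_one hn, ← image_innerColor _ (2 * n),
    ← image_innerColor _ (2 * n + 1), ← heapColor_eq_innerColor (L := L) (by omega) (by omega),
    ← heapColor_eq_innerColor (L := L) (by omega) (by omega),
    ← image_heapColor_heapParent (L := L) hn (by omega)]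
  fin_cases i <;> exact le_rfl

theorem isStarAt_heapColor_of_le_two_mul {L n : ℕ} (hL8 : 8 ∣ L) (hL : 24 ≤ L) (hnL : n < L)
    (hLn : L ≤ 2 * n) :
    IsStarAt (heapColor L treeColor arcColor n) fun i =>
      Finset.univ.image (heapColor L treeColor arcColor (heapNeighbor L n i)) := by
  have hstar := isStarAt_innerColor_of_leafColor (palette (n / 4)) n
  rw [← palette_eq_mul_mul (by omega),
    ← image_heapColor_heapParent (L := L) (by omega) (by omega)] at hstar
  rw [heapColor_eq_innerColor (by omega) hnL, heapNeighbor_of_lt (by omega) hnL]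
  refine hstar.mono fun i => ?_
  have hleft := heapColor_eq_leafColor hL8 hL hLn
  have hright := heapColor_eq_leafColor hL8 hL (hLn.trans (Nat.le_succ _))
  rw [show 2 * n / 8 = n / 4 by omega] at hleft
  rw [Nat.succ_eq_add_one, show (2 * n + 1) / 8 = n / 4 by omega] at hright
  rw [← hleft, ← hright]
  fin_cases i <;> exact le_rfl

theorem isStarAt_heapColor_of_le {L n : ℕ} (hL8 : 8 ∣ L) (hL : 24 ≤ L) (hLn : L ≤ n)
    (hnL : n < 2 * L) :
    IsStarAt (heapColor L treeColor arcColor n) fun i =>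
      Finset.univ.image (heapColor L treeColor arcColor (heapNeighbor L n i)) := by
  rw [heapColor_eq_leafColor hL8 hL hLn, heapNeighbor_of_le (by omega) hLn]
  refine (isStarAt_leafColor (palette (n / 8)) n).mono fun i => ?_
  rw [leafSeen, ← palette_eq_paletteBelow (by omega),
    ← image_heapColor_heapParent (L := L) (by omega) hnL]
  fin_cases i
  · exact le_rfl
  · by_cases hn : n % 8 = 0
    · simp [hn]
    · simp only [Fin.mk_one, Matrix.cons_val, if_neg hn, if_neg (show n ≠ L by omega)]
      rw [heapColor_eq_leafColor hL8 hL (by omega), show (n - 1) / 8 = n / 8 by omega,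
        leafColor_congr _ (show (n - 1) % 16 = (n + 15) % 16 by omega)]
  · by_cases hn : n % 8 = 7
    · simp [hn]
    · simp only [Fin.reduceFinMk, Matrix.cons_val, if_neg hn, if_neg (show n + 1 ≠ 2 * L by omega)]
      rw [heapColor_eq_leafColor hL8 hL (by omega), show (n + 1) / 8 = n / 8 by omega]

theorem isStarAt_heapColor {L n : ℕ} (hL8 : 8 ∣ L) (hL : 24 ≤ L) (hn : IsHeapNum L n) :
    IsStarAt (heapColor L treeColor arcColor n) fun i =>
      Finset.univ.image (heapColor L treeColor arcColor (heapNeighbor L n i)) := by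
  rcases hn.eq_one_or_lt_or_le with rfl | ⟨h3, hnL⟩ | ⟨-, hLn, hnL⟩
  · exact isStarAt_heapColor_one (by omega)
  · rcases lt_or_ge (2 * n) L with h2n | h2n
    · exact isStarAt_heapColor_of_lt h3 (by omega)
    · exact isStarAt_heapColor_of_le_two_mul hL8 hL hnL h2n
  · exact isStarAt_heapColor_of_le hL8 hL hLn hnL

theorem exists_isStarEdgeColoring_completeHalin_of_four_le {l : ℕ} (hl : 4 ≤ l) :
    ∃ c : Sym2 (HalinVert l) → ℕ, IsStarEdgeColoring (completeHalin l) 5 c := by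
  have hL8 : 8 ∣ numLeaves l :=
    (pow_dvd_pow 2 (show 3 ≤ l - 1 by omega) : 2 ^ 3 ∣ 2 ^ (l - 1)).mul_left 3
  have hL : 24 ≤ numLeaves l :=
    Nat.mul_le_mul_left 3 (Nat.pow_le_pow_right two_pos (show 3 ≤ l - 1 by omega))
  exact exists_isStarEdgeColoring_completeHalin treeColor arcColor
    fun n hn => isStarAt_heapColor hL8 hL hn

/-- For every `l ≥ 1`, the complete cubic Halin graph `G_l` has star chromatic index
exactly 5: it admits a star 5-edge coloring but no star 4-edge coloring. -/
theorem starChromaticIndex_completeHalin (l : ℕ) (hl : 1 ≤ l) :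
    (∃ c : Sym2 (HalinVert l) → ℕ, IsStarEdgeColoring (completeHalin l) 5 c) ∧
    ¬ ∃ c : Sym2 (HalinVert l) → ℕ, IsStarEdgeColoring (completeHalin l) 4 c := by
  refine ⟨?_, fun ⟨c, hc⟩ => not_isStarEdgeColoring_four_of_not_cliqueFree_three
    (fun v => (encard_neighborSet_completeHalin hl v).ge) (not_cliqueFree_three_completeHalin hl)
    c hc⟩
  rcases (by omega : l = 1 ∨ l = 2 ∨ l = 3 ∨ 4 ≤ l) with rfl | rfl | rfl | hl4
  · exact exists_isStarEdgeColoring_completeHalin_one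
  · exact exists_isStarEdgeColoring_completeHalin_two
  · exact exists_isStarEdgeColoring_completeHalin_three
  · exact exists_isStarEdgeColoring_completeHalin_of_four_le hl4
end

section
/- For every h ≥ 3 and every side assignment s : {2,…,h−1} → {up, down}, the caterpillar cubic Halin graph G(h,s) has star chromatic index exactly 5: G(h,s) admits a star 5-edge coloring but admits no star 4-edge coloring. -/
/-- Vertices of the caterpillar cubic Halin graph `G(h, s)`: `Sum.inl i` is the spine
vertex `v_{i+1}` (for `i : Fin h`) and `Sum.inr j` is the leaf `u_j` (for `j : Fin (h+2)`). -/
abbrev CatVert (h : ℕ) := Fin h ⊕ Fin (h + 2)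

/-- The indices of the leaves along the exterior cycle of `G(h, s)`: `u_0`, then the
leaves `u_i` (`2 ≤ i ≤ h - 1`) with `s i = false` (down) in increasing order, then
`u_h`, `u_{h+1}`, then the leaves with `s i = true` (up) in decreasing order, then `u_1`. -/
def extCycle (h : ℕ) (s : ℕ → Bool) : List ℕ :=
  0 :: ((List.range' 2 (h - 2)).filter fun i => s i = false) ++ [h, h + 1] ++
    ((List.range' 2 (h - 2)).filter fun i => s i = true).reverse ++ [1]

/-- Base adjacency relation of `G(h, s)`: spine edges `v_i v_{i+1}`; tree edges
`v_1 u_0`, `v_1 u_1`, `v_h u_h`, `v_h u_{h+1}`, and `v_i u_i` for `2 ≤ i ≤ h - 1`;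
and the exterior cycle through the leaves, whose consecutive pairs (including the
wrap-around pair) are exactly the pairs of `extCycle h s` zipped with its rotation. -/
def catRel (h : ℕ) (s : ℕ → Bool) : CatVert h → CatVert h → Prop
  | Sum.inl i, Sum.inl i' => i'.val = i.val + 1
  | Sum.inl i, Sum.inr j =>
      (i.val = 0 ∧ (j.val = 0 ∨ j.val = 1)) ∨
      (i.val = h - 1 ∧ (j.val = h ∨ j.val = h + 1)) ∨
      (j.val = i.val + 1 ∧ 2 ≤ j.val ∧ j.val ≤ h - 1)
  | Sum.inr j, Sum.inr j' => (j.val, j'.val) ∈ (extCycle h s).zip ((extCycle h s).rotate 1)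
  | _, _ => False

/-- The caterpillar cubic Halin graph `G(h, s)`, whose characteristic tree is a
caterpillar with `h + 2` leaves, with side assignment `s` (`false` = down, `true` = up). -/
def caterpillarHalin (h : ℕ) (s : ℕ → Bool) : SimpleGraph (CatVert h) :=
  SimpleGraph.fromRel (catRel h s)

section StarEdgeColoring

variable {V : Type*} {G : SimpleGraph V} {k : ℕ} {c : Sym2 V → ℕ}

theorem three_le_card_insert_iff {α : Type*} [DecidableEq α] {w x y z : α} (hwx : w ≠ x)
    (hxy : x ≠ y) (hyz : y ≠ z) : 3 ≤ ({w, x, y, z} : Finset α).card ↔ (w = y → x ≠ z) := by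
  constructor
  · rintro hcard rfl rfl
    have hle := Finset.card_le_two (a := w) (b := x)
    simp at hcard
    omega
  · intro hne
    rw [Nat.succ_le_iff, Finset.two_lt_card]
    by_cases hwy : w = y
    · exact ⟨w, by simp, x, by simp, z, by simp, hwx, hwy ▸ hyz, hne hwy⟩
    · exact ⟨w, by simp, x, by simp, y, by simp, hwx, hwy, hxy⟩

/-- Paths and cycles with four edges can be treated together: in a proper edge coloring, a walk
`v₀ v₁ v₂ v₃ v₄` with `v₀ ≠ v₂` whose edges alternate between two colors is one of them. -/
theorem isStarEdgeColoring_iff : IsStarEdgeColoring G k c ↔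
    (∀ a b, G.Adj a b → c s(a, b) < k) ∧
    (∀ a b b', G.Adj a b → G.Adj a b' → b ≠ b' → c s(a, b) ≠ c s(a, b')) ∧
    ∀ v₀ v₁ v₂ v₃ v₄, G.Adj v₀ v₁ → G.Adj v₁ v₂ → G.Adj v₂ v₃ → G.Adj v₃ v₄ → v₀ ≠ v₂ →
      c s(v₀, v₁) = c s(v₂, v₃) → c s(v₁, v₂) ≠ c s(v₃, v₄) := by
  refine and_congr (by simp [Sym2.forall]) (and_congr_right fun hprop => ?_)
  have hne {x y z : V} (hxy : G.Adj x y) (hyz : G.Adj y z) (hxz : x ≠ z) :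
      c s(x, y) ≠ c s(y, z) :=
    Sym2.eq_swap (a := x) ▸ hprop y x z hxy.symm hyz hxz
  have hcard {v₀ v₁ v₂ v₃ v₄ : V} (h₀₁ : G.Adj v₀ v₁) (h₁₂ : G.Adj v₁ v₂) (h₂₃ : G.Adj v₂ v₃)
      (h₃₄ : G.Adj v₃ v₄) (h₀₂ : v₀ ≠ v₂) (h₁₃ : v₁ ≠ v₃) (h₂₄ : v₂ ≠ v₄) :=
    three_le_card_insert_iff (hne h₀₁ h₁₂ h₀₂) (hne h₁₂ h₂₃ h₁₃) (hne h₂₃ h₃₄ h₂₄)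
  constructor
  · rintro ⟨hpath, hcycle⟩ v₀ v₁ v₂ v₃ v₄ h₀₁ h₁₂ h₂₃ h₃₄ h₀₂ e e'
    have h₀₃ : v₀ ≠ v₃ := by
      rintro rfl
      exact hne h₀₁.symm h₂₃.symm h₁₂.ne (by rw [Sym2.eq_swap, e, Sym2.eq_swap])
    have h₁₃ : v₁ ≠ v₃ := by
      rintro rfl
      exact hne h₀₁ h₁₂ h₀₂ (by rw [e, Sym2.eq_swap])
    have h₂₄ : v₂ ≠ v₄ := by
      rintro rfl
      exact hne h₀₁ h₁₂ h₀₂ (by rw [e, e', Sym2.eq_swap])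
    have h₁₄ : v₁ ≠ v₄ := by
      rintro rfl
      exact hne h₃₄ h₁₂ h₂₃.ne' e'.symm
    refine (hcard h₀₁ h₁₂ h₂₃ h₃₄ h₀₂ h₁₃ h₂₄).1 ?_ e e'
    by_cases h₀₄ : v₀ = v₄
    · subst h₀₄
      exact hcycle v₀ v₁ v₂ v₃ (by simp [*, h₀₁.ne, h₁₂.ne, h₂₃.ne]) h₀₁ h₁₂ h₂₃ h₃₄
    · exact hpath v₀ v₁ v₂ v₃ v₄ (by simp [*, h₀₁.ne, h₁₂.ne, h₂₃.ne, h₃₄.ne]) h₀₁ h₁₂ h₂₃ h₃₄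
  · refine fun hwalk => ⟨fun v₀ v₁ v₂ v₃ v₄ hnd h₀₁ h₁₂ h₂₃ h₃₄ => ?_,
      fun v₀ v₁ v₂ v₃ hnd h₀₁ h₁₂ h₂₃ h₃₀ => ?_⟩
    all_goals simp only [List.nodup_cons, List.mem_cons, not_or] at hnd
    · exact (hcard h₀₁ h₁₂ h₂₃ h₃₄ hnd.1.2.1 hnd.2.1.2.1 hnd.2.2.1.2.1).2
        (hwalk v₀ v₁ v₂ v₃ v₄ h₀₁ h₁₂ h₂₃ h₃₄ hnd.1.2.1)
    · exact (hcard h₀₁ h₁₂ h₂₃ h₃₀ hnd.1.2.1 hnd.2.1.2.1 (Ne.symm hnd.1.2.1)).2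
        (hwalk v₀ v₁ v₂ v₃ v₀ h₀₁ h₁₂ h₂₃ h₃₀ hnd.1.2.1)

/-- The colors at `v` of the edges to `p` and `q` differ, and no walk with the middle edges `pv`
and `vq` can alternate between them, when `C w` contains the colors occurring at `w`. -/
def StarCompatible (f : Sym2 V → Fin k) (C : V → Finset (Fin k)) (v p q : V) : Prop :=
  f s(v, p) ≠ f s(v, q) ∧ (f s(v, q) ∈ C p → f s(v, p) ∉ C q)

theorem StarCompatible.symm {f : Sym2 V → Fin k} {C : V → Finset (Fin k)} {v p q : V}
    (h : StarCompatible f C v p q) : StarCompatible f C v q p :=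
  ⟨h.1.symm, fun hp hq => h.2 hq hp⟩

theorem isStarEdgeColoring_of_starCompatible {f : Sym2 V → Fin k} {C : V → Finset (Fin k)}
    (hC : ∀ v w, G.Adj v w → f s(v, w) ∈ C v)
    (hf : ∀ v p q, G.Adj v p → G.Adj v q → p ≠ q → StarCompatible f C v p q) :
    IsStarEdgeColoring G k fun e => (f e).val := by
  refine isStarEdgeColoring_iff.2 ⟨fun a b _ => (f s(a, b)).isLt,
    fun a b b' hb hb' hne e => (hf a b b' hb hb' hne).1 (Fin.ext e), ?_⟩
  intro v₀ v₁ v₂ v₃ v₄ h₀₁ h₁₂ h₂₃ h₃₄ h₀₂ e e'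
  have h₁₃ : v₁ ≠ v₃ := by
    rintro rfl
    exact (hf v₁ v₀ v₂ h₀₁.symm h₁₂ h₀₂).1 (by rw [Sym2.eq_swap, Fin.ext e, Sym2.eq_swap])
  refine (hf v₂ v₁ v₃ h₁₂.symm h₂₃ h₁₃).2 ?_ ?_
  · rw [← Fin.ext e, Sym2.eq_swap]
    exact hC v₁ v₀ h₀₁.symm
  · rw [Sym2.eq_swap, Fin.ext e']
    exact hC v₃ v₄ h₃₄

theorem IsStarEdgeColoring.pendant_ne_opposite (hc : IsStarEdgeColoring G 4 c)
    (hdeg : ∀ v a b, ∃ w, G.Adj v w ∧ w ≠ a ∧ w ≠ b) {x y z p : V} (hxy : G.Adj x y)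
    (hxz : G.Adj x z) (hyz : G.Adj y z) (hxp : G.Adj x p) (hpy : p ≠ y) (hpz : p ≠ z) :
    c s(x, p) ≠ c s(y, z) := by
  obtain ⟨hlt, hprop, hwalk⟩ := isStarEdgeColoring_iff.1 hc
  intro e
  have hfar {w : V} (hpw : G.Adj p w) (hwx : w ≠ x) :
      c s(p, w) ≠ c s(x, y) ∧ c s(p, w) ≠ c s(x, z) ∧ c s(p, w) ≠ c s(x, p) := by
    rw [Sym2.eq_swap (a := p)]
    refine ⟨fun e' => ?_, fun e' => ?_, fun e' => ?_⟩
    · exact hwalk w p x y z hpw.symm hxp.symm hxy hyz hwx e' (Sym2.eq_swap (a := p) ▸ e)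
    · exact hwalk w p x z y hpw.symm hxp.symm hxz hyz.symm hwx e'
        (by rw [Sym2.eq_swap, e, Sym2.eq_swap])
    · exact hprop p w x hpw hxp.symm hwx (by rw [Sym2.eq_swap, e', Sym2.eq_swap])
  obtain ⟨w, hpw, hwx, -⟩ := hdeg p x x
  obtain ⟨w', hpw', hwx', hww'⟩ := hdeg p x w
  have hw := hfar hpw hwx
  have hw' := hfar hpw' hwx'
  have := hprop p w' w hpw' hpw hww'
  have := hprop x y z hxy hxz hyz.ne
  have := hprop x y p hxy hxp hpy.symm
  have := hprop x z p hxz hxp hpz.symm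
  have := hlt _ _ hxy
  have := hlt _ _ hxz
  have := hlt _ _ hxp
  have := hlt _ _ hpw
  have := hlt _ _ hpw'
  omega

/-- With four colors, the three edges leaving the triangle have the color that is missing on the
triangle, and then only one color is left for the two further edges at the end of one of them. -/
theorem not_isStarEdgeColoring_four_of_triangle
    (hdeg : ∀ v a b, ∃ w, G.Adj v w ∧ w ≠ a ∧ w ≠ b) {x y z : V} (hxy : G.Adj x y)
    (hxz : G.Adj x z) (hyz : G.Adj y z) : ¬ IsStarEdgeColoring G 4 c := by
  intro hc
  obtain ⟨hlt, hprop, hwalk⟩ := isStarEdgeColoring_iff.1 hc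
  have hpendant {x y z p : V} (hxy : G.Adj x y) (hxz : G.Adj x z) (hyz : G.Adj y z)
      (hxp : G.Adj x p) (hpy : p ≠ y) (hpz : p ≠ z) : c s(x, p) < 4 ∧
      c s(x, p) ≠ c s(x, y) ∧ c s(x, p) ≠ c s(x, z) ∧ c s(x, p) ≠ c s(y, z) :=
    ⟨hlt _ _ hxp, hprop x p y hxp hxy hpy, hprop x p z hxp hxz hpz,
      hc.pendant_ne_opposite hdeg hxy hxz hyz hxp hpy hpz⟩
  have hx := hprop x y z hxy hxz hyz.ne
  have hy := hprop y x z hxy.symm hyz hxz.ne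
  have hz := hprop z x y hxz.symm hyz.symm hxy.ne
  have hltxy := hlt _ _ hxy
  have hltxz := hlt _ _ hxz
  have hltyz := hlt _ _ hyz
  obtain ⟨p, hxp, hpy, hpz⟩ := hdeg x y z
  obtain ⟨q, hyq, hqx, hqz⟩ := hdeg y x z
  obtain ⟨r, hzr, hrx, hry⟩ := hdeg z x y
  have hp := hpendant hxy hxz hyz hxp hpy hpz
  have hq := hpendant hxy.symm hyz hxz hyq hqx hqz
  have hr := hpendant hxz.symm hyz.symm hxy hzr hrx hry
  simp only [Sym2.eq_swap (a := y) (b := x), Sym2.eq_swap (a := z) (b := x),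
    Sym2.eq_swap (a := z) (b := y)] at hy hz hq hr
  have hpq : c s(x, p) = c s(y, q) := by omega
  have hpr : c s(x, p) = c s(z, r) := by omega
  have hfar {w : V} (hpw : G.Adj p w) (hwx : w ≠ x) : c s(p, w) = c s(y, z) := by
    have hwp := hprop p w x hpw hxp.symm hwx
    have hwy := hwalk w p x y q hpw.symm hxp.symm hxy hyq hwx
    have hwz := hwalk w p x z r hpw.symm hxp.symm hxz hzr hwx
    simp only [Sym2.eq_swap (a := p) (b := x), Sym2.eq_swap (a := w) (b := p)] at hwp hwy hwz
    have := hlt _ _ hpw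
    have := fun e => hwy e hpq
    have := fun e => hwz e hpr
    omega
  obtain ⟨w, hpw, hwx, -⟩ := hdeg p x x
  obtain ⟨w', hpw', hwx', hww'⟩ := hdeg p x w
  exact hprop p w' w hpw' hpw hww' ((hfar hpw' hwx').trans (hfar hpw hwx).symm)

end StarEdgeColoring

section List

theorem exists_mem_zip_rotate_one {α : Type*} {l : List α} (hl : l.Nodup) (hlen : 3 ≤ l.length)
    {x : α} (hx : x ∈ l) : ∃ y z, (x, y) ∈ l.zip (l.rotate 1) ∧ (z, x) ∈ l.zip (l.rotate 1) ∧
      x ≠ y ∧ x ≠ z ∧ y ≠ z := by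
  have hmem {i : ℕ} (hi : i < l.length) :
      (l[i], l[(i + 1) % l.length]'(Nat.mod_lt _ (by omega))) ∈ l.zip (l.rotate 1) :=
    List.mem_iff_getElem.2 ⟨i, by simpa using hi, by simp [List.getElem_rotate]⟩
  have hmod {i : ℕ} (hi : i < l.length) :
      (i + 1) % l.length = i + 1 ∨ i + 1 = l.length ∧ (i + 1) % l.length = 0 := by
    obtain hlt | heq : i + 1 < l.length ∨ i + 1 = l.length := by omega
    · exact .inl (Nat.mod_eq_of_lt hlt)
    · exact .inr ⟨heq, heq ▸ Nat.mod_self _⟩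
  obtain ⟨k, hk, rfl⟩ := List.mem_iff_getElem.1 hx
  obtain ⟨m, hm, hmk⟩ : ∃ m < l.length, (m + 1) % l.length = k := by
    rcases k with _ | k
    · exact ⟨l.length - 1, by omega, by simp [Nat.sub_add_cancel (by omega : 1 ≤ l.length)]⟩
    · exact ⟨k, by omega, Nat.mod_eq_of_lt hk⟩
  have hkm := hmod hk
  have hmm := hmod hm
  refine ⟨_, l[m], hmem hk, by simpa only [hmk] using hmem hm, ?_, ?_, ?_⟩ <;>
    rw [Ne, hl.getElem_inj_iff] <;> omega

theorem of_mem_zip_of_pairwise_lt {α : Type*} [Preorder α] {a b : α} {l : List α}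
    (hl : (a :: l ++ [b]).Pairwise (· < ·)) {x y : α} (hxy : (x, y) ∈ (a :: l).zip (l ++ [b])) :
    x ∈ a :: l ∧ y ∈ l ++ [b] ∧ x < y ∧ ∀ i ∈ l, i ≤ x ∨ y ≤ i := by
  refine ⟨(List.of_mem_zip hxy).1, (List.of_mem_zip hxy).2, ?_⟩
  induction l generalizing a with
  | nil => simp_all
  | cons c l ih =>
    have hac := List.pairwise_cons.1 hl
    rw [List.cons_append, List.zip_cons_cons, List.mem_cons, Prod.mk.injEq] at hxy
    rcases hxy with ⟨rfl, rfl⟩ | hxy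
    · have hcl := (List.pairwise_cons.1 hac.2).1
      refine ⟨hac.1 _ (by simp), fun i hi => .inr ?_⟩
      rcases List.mem_cons.1 hi with rfl | hi
      · rfl
      · exact (hcl i (by simp [hi])).le
    · obtain ⟨hlt, hbetween⟩ := ih hac.2 hxy
      refine ⟨hlt, List.forall_mem_cons.2 ⟨?_, hbetween⟩⟩
      rcases List.mem_cons.1 (List.of_mem_zip hxy).1 with rfl | hx
      · exact .inl le_rfl
      · exact .inl ((List.pairwise_cons.1 hac.2).1 x (by simp [hx])).le

end List

namespace CaterpillarHalin

/-- The strands of `G(h, s)`: `u_0` and `u_{h+1}` are joined by the spine (`none`) and by the two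
sides of the exterior cycle (`some b`), and the `i`-th rung `v_i u_i` joins the spine to a side. -/
abbrev Strand := Option Bool

/-- A colored strand edge, oriented away from `u_0`: its color, the three colors at its tail, and
colors that must not occur at its head. -/
structure Wire where
  color : Fin 5
  tail : Finset (Fin 5)
  forbidden : Finset (Fin 5)

namespace Wire

/-- The wire `w'` is the wire `w`, possibly with more forbidden colors. -/
structure Continues (w w' : Wire) : Prop where
  color_eq : w'.color = w.color
  tail_eq : w'.tail = w.tail
  forbidden_subset : w.forbidden ⊆ w'.forbidden

/-- The wire `w` ends, and the wire `w'` begins, at an end of a rung of color `r` whose other end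
is the tail of `o'`. The implications express `StarCompatible` at this end for each two of the three
edges; as the colors at the head of `w'` are not known yet, some of them are forbidden there. -/
structure Joins (w w' o' : Wire) (r : Fin 5) : Prop where
  tail_eq : w'.tail = {w.color, w'.color, r}
  color_ne : w.color ≠ w'.color
  rung_ne : w.color ≠ r ∧ w'.color ≠ r
  disjoint : Disjoint w.forbidden w'.tail
  rung_color : r ∈ w.tail → w.color ∉ o'.tail
  color_forbidden : w'.color ∈ w.tail → w.color ∈ w'.forbidden
  rung_forbidden : w'.color ∈ o'.tail → r ∈ w'.forbidden

/-- Renaming the colors of a wire. -/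
def map (f : Fin 5 → Fin 5) (w : Wire) : Wire :=
  ⟨f w.color, w.tail.image f, w.forbidden.image f⟩

theorem map_id (w : Wire) : w.map id = w := by simp [map]

theorem map_map (f g : Fin 5 → Fin 5) (w : Wire) : (w.map g).map f = w.map (f ∘ g) := by
  simp [map, Finset.image_image]

instance (w w' : Wire) : Decidable (w.Continues w') :=
  decidable_of_iff (w'.color = w.color ∧ w'.tail = w.tail ∧ w.forbidden ⊆ w'.forbidden)
    ⟨fun ⟨h₁, h₂, h₃⟩ => ⟨h₁, h₂, h₃⟩, fun ⟨h₁, h₂, h₃⟩ => ⟨h₁, h₂, h₃⟩⟩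

instance (w w' o' : Wire) (r : Fin 5) : Decidable (w.Joins w' o' r) :=
  decidable_of_iff (w'.tail = {w.color, w'.color, r} ∧ w.color ≠ w'.color ∧
      (w.color ≠ r ∧ w'.color ≠ r) ∧ Disjoint w.forbidden w'.tail ∧
      (r ∈ w.tail → w.color ∉ o'.tail) ∧ (w'.color ∈ w.tail → w.color ∈ w'.forbidden) ∧
      (w'.color ∈ o'.tail → r ∈ w'.forbidden))
    ⟨fun ⟨h₁, h₂, h₃, h₄, h₅, h₆, h₇⟩ => ⟨h₁, h₂, h₃, h₄, h₅, h₆, h₇⟩,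
      fun ⟨h₁, h₂, h₃, h₄, h₅, h₆, h₇⟩ => ⟨h₁, h₂, h₃, h₄, h₅, h₆, h₇⟩⟩

theorem Continues.refl (w : Wire) : w.Continues w := ⟨rfl, rfl, subset_rfl⟩

theorem Continues.trans {w w' w'' : Wire} (h : w.Continues w') (h' : w'.Continues w'') :
    w.Continues w'' :=
  ⟨h'.color_eq.trans h.color_eq, h'.tail_eq.trans h.tail_eq,
    h.forbidden_subset.trans h'.forbidden_subset⟩

theorem Continues.map {w w' : Wire} (h : w.Continues w') (f : Fin 5 → Fin 5) :
    (w.map f).Continues (w'.map f) :=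
  ⟨congrArg f h.color_eq, congrArg (Finset.image f) h.tail_eq,
    Finset.image_subset_image h.forbidden_subset⟩

theorem Joins.map {w w' o' : Wire} {r : Fin 5} (h : w.Joins w' o' r) {f : Fin 5 → Fin 5}
    (hf : f.Injective) : (w.map f).Joins (w'.map f) (o'.map f) (f r) where
  tail_eq := by simp [Wire.map, h.tail_eq, Finset.image_insert]
  color_ne := hf.ne h.color_ne
  rung_ne := ⟨hf.ne h.rung_ne.1, hf.ne h.rung_ne.2⟩
  disjoint := (Finset.disjoint_image hf).2 h.disjoint
  rung_color := by simpa [Wire.map, hf.mem_finset_image] using h.rung_color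
  color_forbidden := by simpa [Wire.map, hf.mem_finset_image] using h.color_forbidden
  rung_forbidden := by simpa [Wire.map, hf.mem_finset_image] using h.rung_forbidden

theorem Joins.color_mem {w w' o' : Wire} {r : Fin 5} (h : w.Joins w' o' r) :
    w.color ∈ w'.tail := by simp [h.tail_eq]

theorem Joins.next_color_mem {w w' o' : Wire} {r : Fin 5} (h : w.Joins w' o' r) :
    w'.color ∈ w'.tail := by simp [h.tail_eq]

theorem Joins.rung_mem {w w' o' : Wire} {r : Fin 5} (h : w.Joins w' o' r) :
    r ∈ w'.tail := by simp [h.tail_eq]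

end Wire

/-- The wires of the three strands that cross the gap between two successive positions. -/
abbrev Cut := Strand → Wire

namespace Cut

/-- The wires of `t'` follow those of `t` past a rung of color `r` on side `b`. -/
structure Step (t t' : Cut) (b : Bool) (r : Fin 5) : Prop where
  spine : (t none).Joins (t' none) (t' (some b)) r
  side : (t (some b)).Joins (t' (some b)) (t' none) r
  other : (t (some !b)).Continues (t' (some !b))

/-- The wires of `t` have the common tail `u_0`. -/
structure IsStart (t : Cut) : Prop where
  color_mem : ∀ a a', (t a).color ∈ (t a').tail
  tail_eq : ∀ a a', (t a).tail = (t a').tail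
  forbidden : ∀ a a', a ≠ a' → (t a).color ≠ (t a').color ∧
    ((t a).color ∈ (t a').forbidden ∨ (t a').color ∈ (t a).forbidden)

/-- The wires of `t` can be given the common head `u_{h+1}`. -/
structure IsEnd (t : Cut) : Prop where
  color_notMem : ∀ a a', (t a).color ∉ (t a').forbidden
  color_ne : ∀ a a', a ≠ a' → (t a).color ≠ (t a').color ∧
    ((t a).color ∈ (t a').tail → (t a').color ∉ (t a).tail)

/-- Renaming colors by `f` and, if `e` holds, exchanging the two sides. -/
def act (f : Fin 5 → Fin 5) (e : Bool) (t : Cut) : Cut := fun a => (t (a.map (e ^^ ·))).map f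

theorem act_act (f g : Fin 5 → Fin 5) (e e' : Bool) (t : Cut) :
    (t.act g e').act f e = t.act (f ∘ g) (e ^^ e') := by
  funext a
  simp [act, Wire.map_map, Function.comp_def, Bool.xor_left_comm]

instance (t t' : Cut) (b : Bool) (r : Fin 5) : Decidable (t.Step t' b r) :=
  decidable_of_iff ((t none).Joins (t' none) (t' (some b)) r ∧
      (t (some b)).Joins (t' (some b)) (t' none) r ∧ (t (some !b)).Continues (t' (some !b)))
    ⟨fun ⟨h₁, h₂, h₃⟩ => ⟨h₁, h₂, h₃⟩, fun ⟨h₁, h₂, h₃⟩ => ⟨h₁, h₂, h₃⟩⟩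

instance (t : Cut) : Decidable t.IsEnd :=
  decidable_of_iff ((∀ a a', (t a).color ∉ (t a').forbidden) ∧
      ∀ a a', a ≠ a' → (t a).color ≠ (t a').color ∧
        ((t a).color ∈ (t a').tail → (t a').color ∉ (t a).tail))
    ⟨fun ⟨h₁, h₂⟩ => ⟨h₁, h₂⟩, fun ⟨h₁, h₂⟩ => ⟨h₁, h₂⟩⟩

theorem Step.act {t t' : Cut} {b e : Bool} {r : Fin 5} (h : t.Step t' (e ^^ b) r)
    {f : Fin 5 → Fin 5} (hf : f.Injective) : (t.act f e).Step (t'.act f e) b (f r) where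
  spine := h.spine.map hf
  side := h.side.map hf
  other := by simpa [Cut.act] using h.other.map f

theorem IsEnd.act {t : Cut} (h : t.IsEnd) {f : Fin 5 → Fin 5} (hf : f.Injective) (e : Bool) :
    (t.act f e).IsEnd where
  color_notMem a a' := by simpa [Cut.act, Wire.map, hf.mem_finset_image] using h.color_notMem _ _
  color_ne a a' haa' := by
    have hmap : a.map (e ^^ ·) ≠ a'.map (e ^^ ·) :=
      (Option.map_injective fun _ _ => Bool.xor_right_inj.1).ne haa'
    simpa [Cut.act, Wire.map, hf.mem_finset_image, hf.eq_iff] using h.color_ne _ _ hmap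

/-- The cut after a rung of color `r` on side `b`, when the next edges of the spine and of that
side have colors `x` and `y`, with no more forbidden colors than `Wire.Joins` requires. -/
def extend (t : Cut) (b : Bool) (r x y : Fin 5) : Cut :=
  let T : Finset (Fin 5) := {(t none).color, x, r}
  let U : Finset (Fin 5) := {(t (some b)).color, y, r}
  fun
  | none => ⟨x, T, (if x ∈ (t none).tail then {(t none).color} else ∅) ∪ if x ∈ U then {r} else ∅⟩
  | some b' => if b' = b
    then ⟨y, U, (if y ∈ (t (some b)).tail then {(t (some b)).color} else ∅) ∪
      if y ∈ T then {r} else ∅⟩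
    else t (some b')

/-- The cut with the given wires on the spine and on the sides `false` and `true`. -/
def ofWires (w₀ w₁ w₂ : Wire) : Cut
  | none => w₀
  | some false => w₁
  | some true => w₂

/-- Cuts such that, up to renaming colors and exchanging sides, each of them can be followed by
another one, whatever the side of the next rung. They were found by computer search. -/
def core : Fin 10 → Cut
  | 0 => ofWires ⟨0, {0, 1, 2}, {1, 2}⟩ ⟨3, {0, 1, 3}, {0, 1}⟩ ⟨3, {0, 2, 3}, {0, 2}⟩
  | 1 => ofWires ⟨0, {0, 1, 2}, ∅⟩ ⟨0, {0, 1, 3}, ∅⟩ ⟨3, {1, 2, 3}, ∅⟩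
  | 2 => ofWires ⟨0, {0, 1, 2}, {1}⟩ ⟨0, {0, 2, 3}, {2}⟩ ⟨3, {1, 3, 4}, ∅⟩
  | 3 => ofWires ⟨0, {0, 1, 2}, {1}⟩ ⟨1, {0, 1, 3}, {0}⟩ ⟨1, {1, 2, 3}, {2}⟩
  | 4 => ofWires ⟨0, {0, 1, 2}, {1}⟩ ⟨2, {0, 2, 3}, {0, 3}⟩ ⟨3, {0, 1, 3}, ∅⟩
  | 5 => ofWires ⟨0, {0, 1, 2}, {1}⟩ ⟨2, {1, 2, 3}, {1}⟩ ⟨3, {0, 2, 3}, {2}⟩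
  | 6 => ofWires ⟨0, {0, 1, 2}, {1}⟩ ⟨3, {0, 1, 3}, {0}⟩ ⟨4, {0, 3, 4}, {0, 3}⟩
  | 7 => ofWires ⟨0, {0, 1, 2}, {1}⟩ ⟨3, {1, 2, 3}, {1}⟩ ⟨3, {0, 3, 4}, ∅⟩
  | 8 => ofWires ⟨0, {0, 1, 2}, {1}⟩ ⟨3, {1, 3, 4}, ∅⟩ ⟨4, {1, 3, 4}, {3}⟩
  | 9 => ofWires ⟨0, {0, 1, 2}, {1, 2}⟩ ⟨0, {0, 1, 3}, {1, 3}⟩ ⟨3, {0, 2, 3}, ∅⟩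

/-- How to follow a cut of `core` past a rung on a given side: the renaming, the exchange and the
index describing the next cut, and the color of the rung. -/
def next : Fin 10 → Bool → (Fin 5 → Fin 5) × Bool × Fin 10 × Fin 5
  | 0, false => (![3, 0, 4, 2, 1], true, 9, 4)
  | 0, true => (![3, 0, 4, 1, 2], false, 9, 4)
  | 1, false => (![1, 0, 4, 3, 2], false, 7, 4)
  | 1, true => (![1, 0, 4, 3, 2], false, 3, 4)
  | 2, false => (![3, 4, 0, 1, 2], true, 1, 4)
  | 2, true => (![2, 0, 4, 3, 1], false, 3, 4)
  | 3, false => (![4, 3, 0, 2, 1], false, 8, 3)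
  | 3, true => (![3, 4, 0, 1, 2], true, 5, 4)
  | 4, false => (![3, 4, 0, 1, 2], true, 2, 4)
  | 4, true => (![3, 0, 4, 2, 1], false, 0, 4)
  | 5, false => (![2, 4, 0, 3, 1], false, 0, 4)
  | 5, true => (![3, 4, 0, 1, 2], true, 6, 4)
  | 6, false => (![3, 2, 0, 4, 1], false, 0, 2)
  | 6, true => (![3, 2, 0, 1, 4], false, 2, 2)
  | 7, false => (![4, 2, 0, 3, 1], false, 9, 2)
  | 7, true => (![4, 2, 0, 1, 3], true, 8, 2)
  | 8, false => (![3, 2, 0, 1, 4], false, 6, 2)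
  | 8, true => (![4, 2, 0, 1, 3], true, 6, 2)
  | 9, false => (![3, 0, 4, 2, 1], true, 1, 4)
  | 9, true => (![3, 4, 0, 1, 2], false, 4, 4)

theorem step_core (k : Fin 10) (b : Bool) : (next k b).1.Injective ∧
    (core k).Step ((core (next k b).2.2.1).act (next k b).1 (next k b).2.1) b
      (next k b).2.2.2 := by
  decide +kernel +revert

/-- How to complete a cut of `core` by two rungs, the first one on a given side: the color of that
rung with those of the next edges of the spine and of that side, then the colors of the edges
between the spine and the side `false`, between the spine and the side `true`, and between the two
sides, of the final triangle. -/
def finish : Fin 10 → Bool → Fin 5 × Fin 5 × Fin 5 × Fin 5 × Fin 5 × Fin 5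
  | 0, false => (4, 3, 2, 0, 1, 4)
  | 0, true => (4, 3, 1, 2, 0, 4)
  | 1, false => (4, 1, 2, 3, 4, 0)
  | 1, true => (4, 1, 0, 4, 3, 2)
  | 2, false => (4, 3, 1, 0, 2, 4)
  | 2, true => (4, 2, 0, 4, 3, 1)
  | 3, false => (4, 3, 2, 1, 0, 4)
  | 3, true => (4, 3, 0, 4, 1, 2)
  | 4, false => (4, 3, 1, 0, 2, 4)
  | 4, true => (2, 3, 1, 1, 0, 4)
  | 5, false => (3, 4, 0, 2, 1, 4)
  | 5, true => (4, 3, 1, 0, 2, 4)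
  | 6, false => (4, 3, 1, 0, 1, 2)
  | 6, true => (2, 3, 1, 4, 0, 2)
  | 7, false => (4, 3, 2, 0, 1, 4)
  | 7, true => (2, 3, 1, 4, 0, 2)
  | 8, false => (2, 3, 1, 4, 0, 2)
  | 8, true => (2, 4, 1, 0, 3, 2)
  | 9, false => (4, 3, 2, 0, 1, 4)
  | 9, true => (4, 3, 1, 2, 0, 4)

theorem exists_isEnd_of_core (k : Fin 10) (b b' : Bool) :
    ∃ t r t' r', (core k).Step t b r ∧ t.Step t' b' r' ∧ t'.IsEnd := by
  have key : ∀ k b b', let (r, x, y, p, q, m) := finish k b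
      let t := (core k).extend b r x y
      let t' := if b' then t.extend true q p m else t.extend false p q m
      (core k).Step t b r ∧ t.Step t' b' (if b' then q else p) ∧ t'.IsEnd := by
    decide +kernel
  exact ⟨_, _, _, _, key k b b'⟩

/-- The cuts of `core`, up to renaming colors and exchanging sides. -/
def IsCore (t : Cut) : Prop :=
  ∃ f : Fin 5 → Fin 5, f.Injective ∧ ∃ e k, t = (core k).act f e

theorem isCore_core (k : Fin 10) : (core k).IsCore :=
  ⟨id, Function.injective_id, false, k, by funext a; simp [act, Wire.map_id]⟩

theorem IsCore.exists_step {t : Cut} (ht : t.IsCore) (b : Bool) :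
    ∃ t' r, t'.IsCore ∧ t.Step t' b r := by
  obtain ⟨f, hf, e, k, rfl⟩ := ht
  obtain ⟨hinj, hstep⟩ := step_core k (e ^^ b)
  exact ⟨_, _, ⟨_, hf.comp hinj, _, _, act_act _ _ _ _ _⟩, hstep.act hf⟩

theorem IsCore.exists_isEnd {t : Cut} (ht : t.IsCore) (b b' : Bool) :
    ∃ t' r t'' r', t.Step t' b r ∧ t'.Step t'' b' r' ∧ t''.IsEnd := by
  obtain ⟨f, hf, e, k, rfl⟩ := ht
  obtain ⟨t', r, t'', r', hstep, hstep', hend⟩ := exists_isEnd_of_core k (e ^^ b) (e ^^ b')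
  exact ⟨_, _, _, _, hstep.act hf, hstep'.act hf, hend.act hf e⟩

end Cut

/-- Cuts `t 0, …, t n`, starting at `u_0` and ending at `u_{n+1}`, and rung colors, that describe
a star coloring when the `i`-th rung is on side `σ i`, for `1 ≤ i ≤ n`. -/
structure Scheme (n : ℕ) (σ : ℕ → Bool) where
  cut : ℕ → Cut
  rung : ℕ → Fin 5
  start : (cut 0).IsStart
  step : ∀ i < n, (cut i).Step (cut (i + 1)) (σ (i + 1)) (rung (i + 1))
  isEnd : (cut n).IsEnd

namespace Cut

/-- The cut `t` can be followed past `n` rungs, on the sides `σ 1, …, σ n`, up to a cut whose wires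
have a common head. -/
def Completable (t : Cut) (n : ℕ) (σ : ℕ → Bool) : Prop :=
  ∃ (u : ℕ → Cut) (r : ℕ → Fin 5), u 0 = t ∧
    (∀ i < n, (u i).Step (u (i + 1)) (σ (i + 1)) (r (i + 1))) ∧ (u n).IsEnd

theorem IsEnd.completable {t : Cut} (ht : t.IsEnd) (σ : ℕ → Bool) : t.Completable 0 σ :=
  ⟨fun _ => t, fun _ => 0, rfl, by simp, ht⟩

theorem Step.completable {t t' : Cut} {n : ℕ} {σ : ℕ → Bool} {r₁ : Fin 5}
    (h : t.Step t' (σ 1) r₁) (ht' : t'.Completable n fun i => σ (i + 1)) :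
    t.Completable (n + 1) σ := by
  obtain ⟨u, r, rfl, hstep, hend⟩ := ht'
  refine ⟨fun | 0 => t | i + 1 => u i, fun | 0 | 1 => r₁ | i + 2 => r (i + 1), rfl, ?_, hend⟩
  rintro (_ | i) hi
  · exact h
  · exact hstep i (by omega)

theorem IsCore.completable {t : Cut} (ht : t.IsCore) (n : ℕ) (σ : ℕ → Bool) :
    t.Completable (n + 2) σ := by
  induction n generalizing t σ with
  | zero =>
    obtain ⟨t', r, t'', r', hstep, hstep', hend⟩ := ht.exists_isEnd (σ 1) (σ 2)
    exact hstep.completable (Step.completable hstep' (hend.completable _))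
  | succ n ih =>
    obtain ⟨t', r, ht', hstep⟩ := ht.exists_step (σ 1)
    exact hstep.completable (ih ht' _)

/-- The wires leaving `u_0`. -/
def initial : Cut := ofWires ⟨1, {0, 1, 3}, ∅⟩ ⟨3, {0, 1, 3}, {0, 1}⟩ ⟨0, {0, 1, 3}, {1}⟩

theorem isStart_initial : initial.IsStart := by
  constructor <;> decide

theorem step_initial : initial.Step (core 0) true 2 := by
  decide

end Cut

theorem exists_scheme {n : ℕ} (hn : 3 ≤ n) {σ : ℕ → Bool} (hσ : σ 1 = true) :
    Nonempty (Scheme n σ) := by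
  obtain ⟨n, rfl⟩ := Nat.exists_eq_add_of_le' hn
  have hstep : Cut.initial.Step (Cut.core 0) (σ 1) 2 := hσ ▸ Cut.step_initial
  obtain ⟨u, r, hu, hstep, hend⟩ := hstep.completable ((Cut.isCore_core 0).completable n _)
  exact ⟨u, r, hu ▸ Cut.isStart_initial, hstep, hend⟩

section Geometry

/-- The side of the exterior cycle that contains the leaf `u_i`, for `1 ≤ i ≤ h`: the assigned one,
with `u_1` counted as up and `u_h` as down. -/
def side (h : ℕ) (s : ℕ → Bool) (i : ℕ) : Bool :=
  if i = 1 then true else if i = h then false else s i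

variable {h : ℕ} {s : ℕ → Bool} {a a' : Strand} {v w w' : CatVert h}

/-- The index of a vertex: `u_j` is at position `j` and `v_i` at position `i`. -/
def pos : CatVert h → ℕ
  | .inl i => i + 1
  | .inr j => j

/-- The strand through a vertex (irrelevant for `u_0` and `u_{h+1}`, which are on all of them). -/
def lane (s : ℕ → Bool) : CatVert h → Strand
  | .inl _ => none
  | .inr j => some (side h s j)

/-- The vertex `v` lies on the strand `a`. -/
def OnStrand (s : ℕ → Bool) (a : Strand) (v : CatVert h) : Prop :=
  pos v = 0 ∨ pos v = h + 1 ∨ lane s v = a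

/-- The vertices `v` and `w` are consecutive on the strand `a`, in this order: all the rungs between
them end on the opposite side. -/
structure StrandEdge (s : ℕ → Bool) (a : Strand) (v w : CatVert h) : Prop where
  tail : OnStrand s a v
  head : OnStrand s a w
  pos_lt : pos v < pos w
  between : ∀ i, pos v < i → i < pos w → a = some !side h s i

theorem pos_le (v : CatVert h) : pos v ≤ h + 1 := by
  rcases v with i | j <;> simp only [pos] <;> omega

theorem OnStrand.lane_eq (hv : OnStrand s a v) (h₀ : 0 < pos v) (h₁ : pos v ≤ h) :
    lane s v = a := by
  unfold OnStrand at hv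
  grind

theorem lane_eq_none_or (s : ℕ → Bool) (v : CatVert h) :
    lane s v = none ∨ lane s v = some (side h s (pos v)) := by
  rcases v with i | j <;> simp [lane, pos]

theorem OnStrand.eq (hv : OnStrand s a v) (hw : OnStrand s a w) (hpos : pos v = pos w) :
    v = w := by
  rcases v with i | j <;> rcases w with i' | j' <;> simp only [pos, OnStrand, lane] at hv hw hpos
  · exact congrArg _ (Fin.ext (by omega))
  · grind
  · grind
  · exact congrArg _ (Fin.ext hpos)

theorem lane_ne_of_pos_eq (hne : v ≠ w) (hpos : pos v = pos w) : lane s v ≠ lane s w :=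
  fun hlane => hne (OnStrand.eq (a := lane s v) (.inr (.inr rfl)) (.inr (.inr hlane.symm)) hpos)

theorem pos_of_pos_eq (hne : v ≠ w) (hpos : pos v = pos w) : 0 < pos v ∧ pos v ≤ h := by
  have hv := pos_le v
  by_contra! hend
  refine hne (OnStrand.eq (s := fun _ => true) (a := none) ?_ ?_ hpos) <;> unfold OnStrand <;> omega

namespace StrandEdge

theorem pos_tail_le (e : StrandEdge s a v w) : pos v ≤ h := by
  have := e.pos_lt
  have := pos_le w
  omega

theorem pos_head_pos (e : StrandEdge s a v w) : 0 < pos w :=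
  e.pos_lt.pos

theorem not_between {x : CatVert h} (e : StrandEdge s a v w) (hx : OnStrand s a x)
    (hvx : pos v < pos x) : pos w ≤ pos x := by
  by_contra! hxw
  have hlane : lane s x = some !side h s (pos x) :=
    (hx.lane_eq hvx.pos (by have := pos_le w; omega)).trans (e.between _ hvx hxw)
  simpa [hlane] using lane_eq_none_or s x

theorem head_unique (e : StrandEdge s a v w) (e' : StrandEdge s a v w') : w = w' :=
  e.head.eq e'.head ((e.not_between e'.head e'.pos_lt).antisymm (e'.not_between e.head e.pos_lt))

theorem tail_unique (e : StrandEdge s a v w) (e' : StrandEdge s a w' w) : v = w' := by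
  refine e.tail.eq e'.tail (le_antisymm ?_ ?_) <;> by_contra! hlt
  · exact (e'.not_between e.tail hlt).not_gt e.pos_lt
  · exact (e.not_between e'.tail hlt).not_gt e'.pos_lt

/-- The two sides of the exterior cycle both have interior vertices, namely `u_1` and `u_h`. -/
theorem pos_head_le (hh : 2 ≤ h) (e : StrandEdge s a v w) (hv : pos v = 0) :
    pos w ≤ h := by
  by_contra! hw
  have h₁ := e.between 1 (by omega) (by omega)
  have h₂ := e.between h (by omega) (by omega)
  have hne : h ≠ 1 := by omega
  simp [h₁, side, hne] at h₂

end StrandEdge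

/-- The indices `1 ≤ i ≤ h` of the leaves on side `b`, in increasing order. -/
def sideLeaves (h : ℕ) (s : ℕ → Bool) (b : Bool) : List ℕ :=
  (List.range' 1 h).filter fun i => side h s i = b

theorem mem_sideLeaves {b : Bool} {i : ℕ} :
    i ∈ sideLeaves h s b ↔ (1 ≤ i ∧ i ≤ h) ∧ side h s i = b := by
  simp only [sideLeaves, List.mem_filter, List.mem_range'_1, decide_eq_true_eq]
  grind

theorem extCycle_eq (hh : 2 ≤ h) : extCycle h s =
    0 :: sideLeaves h s false ++ [h + 1] ++ (sideLeaves h s true).reverse := by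
  have hrange : List.range' 1 h = 1 :: (List.range' 2 (h - 2) ++ [h]) := by
    obtain ⟨n, rfl⟩ := Nat.exists_eq_add_of_le' hh
    rw [List.range'_succ, List.range'_1_concat, Nat.add_sub_cancel, Nat.add_comm n]
  have hmiddle (b : Bool) : (List.range' 2 (h - 2)).filter (fun i => side h s i = b) =
      (List.range' 2 (h - 2)).filter fun i => s i = b := by
    refine List.filter_congr fun i hi => ?_
    rw [List.mem_range'_1] at hi
    rw [side, if_neg (by omega), if_neg (by omega)]
  have hfirst : side h s 1 = true := if_pos rfl
  have hlast : side h s h = false := by rw [side, if_neg (by omega), if_pos rfl]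
  simp only [extCycle, sideLeaves, hrange, List.filter_cons, List.filter_append, hmiddle]
  simp [hfirst, hlast]

theorem pairwise_sideLeaves (b : Bool) :
    (0 :: sideLeaves h s b ++ [h + 1]).Pairwise (· < ·) := by
  have hlt : (sideLeaves h s b).Pairwise (· < ·) :=
    (List.pairwise_lt_range' (s := 1) (n := h)).filter _
  simp only [List.cons_append, List.pairwise_cons, List.pairwise_append, List.mem_append,
    List.mem_singleton, mem_sideLeaves]
  grind

theorem strandEdge_of_mem_zip {b : Bool} {j j' : Fin (h + 2)}
    (hj : (j.val, j'.val) ∈ (0 :: sideLeaves h s b).zip (sideLeaves h s b ++ [h + 1])) :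
    StrandEdge s (some b) (.inr j : CatVert h) (.inr j') := by
  obtain ⟨hj, hj', hlt, hbetween⟩ := of_mem_zip_of_pairwise_lt (pairwise_sideLeaves b) hj
  simp only [List.mem_cons, List.mem_append, mem_sideLeaves] at hj hj' hbetween
  refine ⟨?_, ?_, hlt, fun i hji hij' => ?_⟩
  · simp only [OnStrand, pos, lane]
    grind
  · simp only [OnStrand, pos, lane]
    grind
  · simp only [pos] at hji hij'
    have := j'.isLt
    cases hi : side h s i <;> grind

theorem strandEdge_or_strandEdge_of_mem_zip (hh : 2 ≤ h) {j j' : Fin (h + 2)}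
    (hj : (j.val, j'.val) ∈ (extCycle h s).zip ((extCycle h s).rotate 1)) :
    StrandEdge s (some false) (.inr j : CatVert h) (.inr j') ∨
      StrandEdge s (some true) (.inr j' : CatVert h) (.inr j) := by
  set downs := sideLeaves h s false
  set ups := sideLeaves h s true
  have hreverse : (((0 :: ups).zip (ups ++ [h + 1])).map Prod.swap).reverse =
      ((h + 1) :: ups.reverse).zip (ups.reverse ++ [0]) := by
    rw [List.zip_swap, List.zip_eq_zipWith, List.reverse_zipWith (by simp)]
    simp [List.zip_eq_zipWith]
  have hzip : (extCycle h s).zip ((extCycle h s).rotate 1) =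
      (0 :: downs).zip (downs ++ [h + 1]) ++
        (((0 :: ups).zip (ups ++ [h + 1])).map Prod.swap).reverse := by
    rw [hreverse, ← List.zip_append (by simp), extCycle_eq hh]
    simp [downs, ups]
  rw [hzip, List.mem_append, List.mem_reverse] at hj
  refine hj.imp strandEdge_of_mem_zip fun hj => strandEdge_of_mem_zip ?_
  obtain ⟨⟨i, i'⟩, hi, hswap⟩ := List.mem_map.1 hj
  obtain ⟨rfl, rfl⟩ := Prod.mk.inj hswap
  exact hi

theorem strandEdge_or_pos_eq_of_catRel (hh : 2 ≤ h) (hvw : catRel h s v w) :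
    (∃ a, StrandEdge s a v w ∨ StrandEdge s a w v) ∨ pos v = pos w := by
  rcases v with i | j <;> rcases w with i' | j' <;> simp only [catRel] at hvw
  · refine .inl ⟨none, .inl ⟨?_, ?_, ?_, ?_⟩⟩ <;> simp [OnStrand, pos, lane] <;> grind
  · by_cases h₀ : j'.val = 0
    · refine .inl ⟨none, .inr ⟨?_, ?_, ?_, ?_⟩⟩ <;> simp [OnStrand, pos, lane] <;> grind
    by_cases h₁ : j'.val = h + 1
    · refine .inl ⟨none, .inl ⟨?_, ?_, ?_, ?_⟩⟩ <;> simp [OnStrand, pos, lane] <;> grind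
    · exact .inr (by simp only [pos]; omega)
  · rcases strandEdge_or_strandEdge_of_mem_zip hh hvw with e | e
    · exact .inl ⟨_, .inl e⟩
    · exact .inl ⟨_, .inr e⟩

theorem strandEdge_or_pos_eq_of_adj (hh : 2 ≤ h) (hvw : (caterpillarHalin h s).Adj v w) :
    (∃ a, StrandEdge s a v w) ∨ (∃ a, StrandEdge s a w v) ∨ pos v = pos w := by
  rcases (SimpleGraph.fromRel_adj _ _ _).1 hvw with ⟨-, hr | hr⟩ <;>
    have := strandEdge_or_pos_eq_of_catRel hh hr <;> grind

theorem strandEdge_of_pos_eq_zero (hh : 2 ≤ h) (hvw : (caterpillarHalin h s).Adj v w)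
    (hv : pos v = 0) : ∃ a, StrandEdge s a v w := by
  rcases strandEdge_or_pos_eq_of_adj hh hvw with he | ⟨a, e⟩ | hpos
  · exact he
  · exact absurd e.pos_lt (by omega)
  · exact absurd (pos_of_pos_eq hvw.ne hpos).1 (by omega)

theorem strandEdge_of_pos_eq_add_one (hh : 2 ≤ h) (hvw : (caterpillarHalin h s).Adj v w)
    (hv : pos v = h + 1) : ∃ a, StrandEdge s a w v := by
  rcases strandEdge_or_pos_eq_of_adj hh hvw with ⟨a, e⟩ | he | hpos
  · exact absurd e.pos_tail_le (by omega)
  · exact he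
  · exact absurd (pos_of_pos_eq hvw.ne hpos).2 (by omega)

end Geometry

namespace Scheme

variable {h : ℕ} {s : ℕ → Bool} {a a' : Strand} {v w p q : CatVert h} {m : ℕ}

/-- The edge coloring described by a scheme. An edge between different positions is a strand edge;
its strand is the lane of its first end, or of its second end if the first one is `u_0`. -/
def edgeColor (D : Scheme h (side h s)) : Sym2 (CatVert h) → Fin 5 :=
  let forward v w := (D.cut (pos v) (if pos v = 0 then lane s w else lane s v)).color
  Sym2.lift ⟨fun v w => if pos v < pos w then forward v w else
    if pos w < pos v then forward w v else D.rung (pos v), fun v w => by grind⟩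

/-- The colors of the edges at a vertex. -/
def colorsAt (D : Scheme h (side h s)) (v : CatVert h) : Finset (Fin 5) :=
  if pos v ≤ h then (D.cut (pos v) (lane s v)).tail
  else Finset.univ.image fun a => (D.cut h a).color

variable (D : Scheme h (side h s))

theorem edgeColor_of_pos_eq (hvw : pos v = pos w) : D.edgeColor s(v, w) = D.rung (pos v) := by
  simp [edgeColor, hvw]

theorem edgeColor_of_strandEdge (hh : 2 ≤ h) (e : StrandEdge s a v w) :
    D.edgeColor s(v, w) = (D.cut (pos v) a).color := by
  have ha : (if pos v = 0 then lane s w else lane s v) = a := by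
    split_ifs with hv
    · exact e.head.lane_eq e.pos_head_pos (e.pos_head_le hh hv)
    · exact e.tail.lane_eq (Nat.pos_of_ne_zero hv) e.pos_tail_le
  simp [edgeColor, e.pos_lt, ha]

theorem continues_of_strandEdge (e : StrandEdge s a v w) (hm : pos w = m + 1) :
    (D.cut (pos v) a).Continues (D.cut m a) := by
  have hvm : pos v ≤ m := Nat.lt_succ_iff.1 (e.pos_lt.trans_eq hm)
  have hw := pos_le w
  suffices ∀ i, pos v ≤ i → i ≤ m → (D.cut (pos v) a).Continues (D.cut i a) from this m hvm le_rfl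
  refine Nat.le_induction (fun _ => .refl _) fun i hvi ih him => (ih (by omega)).trans ?_
  rw [e.between (i + 1) (by omega) (by omega)]
  exact (D.step i (by omega)).other

theorem exists_joins (hv : pos v = m + 1) (hm : m < h) : ∃ a',
    (D.cut m (lane s v)).Joins (D.cut (m + 1) (lane s v)) (D.cut (m + 1) a') (D.rung (m + 1)) ∧
      ∀ w, w ≠ v → pos w = pos v → lane s w = a' := by
  have hstep := D.step m hm
  have hne {w : CatVert h} : w ≠ v → pos w = pos v → lane s w ≠ lane s v := lane_ne_of_pos_eq
  rcases lane_eq_none_or s v with hlane | hlane <;> rw [hlane] at hne ⊢ <;> rw [← hv] at hstep ⊢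
  · exact ⟨_, hstep.spine, fun w hwv hpos =>
      hpos ▸ (lane_eq_none_or s w).resolve_left (hne hwv hpos)⟩
  · exact ⟨_, hstep.side, fun w hwv hpos =>
      (lane_eq_none_or s w).resolve_right (hpos ▸ hne hwv hpos)⟩

theorem colorsAt_tail (e : StrandEdge s a v w) (hm : pos w = m + 1) :
    D.colorsAt v = (D.cut m a).tail := by
  rw [colorsAt, if_pos e.pos_tail_le, (D.continues_of_strandEdge e hm).tail_eq]
  rcases Nat.eq_zero_or_pos (pos v) with hv | hv
  · rw [hv, D.start.tail_eq]
  · rw [e.tail.lane_eq hv e.pos_tail_le]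

theorem colorsAt_rung_end (hv : pos v = m + 1) (hm : m < h) :
    D.colorsAt v = (D.cut (m + 1) (lane s v)).tail := by
  rw [colorsAt, if_pos (by omega), hv]

theorem disjoint_forbidden_colorsAt_head (e : StrandEdge s a v w) :
    Disjoint (D.cut (pos v) a).forbidden (D.colorsAt w) := by
  obtain ⟨m, hm⟩ := Nat.exists_eq_add_one.2 e.pos_head_pos
  refine Finset.disjoint_of_subset_left (D.continues_of_strandEdge e hm).forbidden_subset ?_
  rcases (pos_le w).lt_or_eq with hw | hw
  · obtain ⟨a', hjoins, -⟩ := D.exists_joins hm (by omega)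
    rw [e.head.lane_eq e.pos_head_pos (by omega)] at hjoins
    rw [D.colorsAt_rung_end hm (by omega), e.head.lane_eq e.pos_head_pos (by omega)]
    exact hjoins.disjoint
  · obtain rfl : m = h := by omega
    rw [colorsAt, if_neg (by omega), Finset.disjoint_right]
    simp only [Finset.mem_image, Finset.mem_univ, true_and, forall_exists_index,
      forall_apply_eq_imp_iff]
    exact fun a' => D.isEnd.color_notMem a' a

theorem edgeColor_head (hh : 2 ≤ h) (e : StrandEdge s a v w) (hm : pos w = m + 1) :
    D.edgeColor s(w, v) = (D.cut m a).color := by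
  rw [Sym2.eq_swap, D.edgeColor_of_strandEdge hh e, (D.continues_of_strandEdge e hm).color_eq]

theorem edgeColor_mem_colorsAt (hh : 2 ≤ h) (hvw : (caterpillarHalin h s).Adj v w) :
    D.edgeColor s(v, w) ∈ D.colorsAt v := by
  rcases strandEdge_or_pos_eq_of_adj hh hvw with ⟨a, e⟩ | ⟨a, e⟩ | hpos
  · obtain ⟨m, hm⟩ := Nat.exists_eq_add_one.2 e.pos_head_pos
    rw [D.edgeColor_of_strandEdge hh e, D.colorsAt_tail e hm,
      (D.continues_of_strandEdge e hm).tail_eq]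
    rcases hv : pos v with _ | m
    · exact D.start.color_mem a a
    · have hv' := e.pos_tail_le
      obtain ⟨a', hjoins, -⟩ := D.exists_joins hv (by omega)
      exact e.tail.lane_eq (by omega) (by omega) ▸ hjoins.next_color_mem
  · obtain ⟨m, hm⟩ := Nat.exists_eq_add_one.2 e.pos_head_pos
    rw [D.edgeColor_head hh e hm]
    rcases (pos_le v).lt_or_eq with hv | hv
    · obtain ⟨a', hjoins, -⟩ := D.exists_joins hm (by omega)
      rw [D.colorsAt_rung_end hm (by omega)]
      exact e.head.lane_eq (by omega) (by omega) ▸ hjoins.color_mem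
    · obtain rfl : m = h := by omega
      rw [colorsAt, if_neg (by omega)]
      exact Finset.mem_image_of_mem _ (Finset.mem_univ a)
  · obtain ⟨hv₀, hv₁⟩ := pos_of_pos_eq hvw.ne hpos
    obtain ⟨m, hm⟩ := Nat.exists_eq_add_one.2 hv₀
    obtain ⟨a', hjoins, -⟩ := D.exists_joins hm (by omega)
    rw [D.edgeColor_of_pos_eq hpos, D.colorsAt_rung_end hm (by omega), hm]
    exact hjoins.rung_mem

theorem starCompatible_of_tail (hh : 2 ≤ h) (e : StrandEdge s a v p) (e' : StrandEdge s a' v q)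
    (hv : pos v = 0) (hpq : p ≠ q) : StarCompatible D.edgeColor D.colorsAt v p q := by
  have haa' : a ≠ a' := by
    rintro rfl
    exact hpq (e.head_unique e')
  obtain ⟨hne, hforbidden⟩ := D.start.forbidden a a' haa'
  rw [StarCompatible, D.edgeColor_of_strandEdge hh e, D.edgeColor_of_strandEdge hh e']
  have hp := D.disjoint_forbidden_colorsAt_head e
  have hq := D.disjoint_forbidden_colorsAt_head e'
  rw [hv, Finset.disjoint_left] at hp hq
  rw [hv]
  exact ⟨hne, fun hmem hmem' => hforbidden.elim (hq · hmem') (hp · hmem)⟩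

theorem starCompatible_of_head (hh : 2 ≤ h) (e : StrandEdge s a p v) (e' : StrandEdge s a' q v)
    (hv : pos v = h + 1) (hpq : p ≠ q) : StarCompatible D.edgeColor D.colorsAt v p q := by
  have haa' : a ≠ a' := by
    rintro rfl
    exact hpq (e.tail_unique e')
  obtain ⟨hne, htail⟩ := D.isEnd.color_ne a a' haa'
  rw [StarCompatible, D.edgeColor_head hh e hv, D.edgeColor_head hh e' hv, D.colorsAt_tail e hv,
    D.colorsAt_tail e' hv]
  exact ⟨hne, fun hmem hmem' => htail hmem' hmem⟩

theorem starCompatible_prev_next (hh : 2 ≤ h) (e : StrandEdge s a p v) (e' : StrandEdge s a v q)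
    (hv : pos v = m + 1) (hm : m < h) : StarCompatible D.edgeColor D.colorsAt v p q := by
  obtain ⟨a', hjoins, -⟩ := D.exists_joins hv hm
  rw [e'.tail.lane_eq (by omega) (by omega)] at hjoins
  rw [StarCompatible, D.edgeColor_head hh e hv, D.edgeColor_of_strandEdge hh e',
    D.colorsAt_tail e hv]
  have hq := D.disjoint_forbidden_colorsAt_head e'
  rw [hv] at hq ⊢
  exact ⟨hjoins.color_ne, fun hmem => Finset.disjoint_left.1 hq (hjoins.color_forbidden hmem)⟩

theorem starCompatible_prev_rung (hh : 2 ≤ h) (e : StrandEdge s a p v) (hvw : v ≠ w)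
    (hpos : pos w = pos v) (hv : pos v = m + 1) (hm : m < h) :
    StarCompatible D.edgeColor D.colorsAt v p w := by
  obtain ⟨a', hjoins, hw⟩ := D.exists_joins hv hm
  rw [← hw w hvw.symm hpos, e.head.lane_eq (by omega) (by omega)] at hjoins
  rw [StarCompatible, D.edgeColor_head hh e hv, D.edgeColor_of_pos_eq hpos.symm,
    D.colorsAt_tail e hv, D.colorsAt_rung_end (hpos.trans hv) hm, hv]
  exact ⟨hjoins.rung_ne.1, hjoins.rung_color⟩

theorem starCompatible_next_rung (hh : 2 ≤ h) (e : StrandEdge s a v q) (hvw : v ≠ w)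
    (hpos : pos w = pos v) (hv : pos v = m + 1) (hm : m < h) :
    StarCompatible D.edgeColor D.colorsAt v q w := by
  obtain ⟨a', hjoins, hw⟩ := D.exists_joins hv hm
  rw [← hw w hvw.symm hpos, e.tail.lane_eq (by omega) (by omega)] at hjoins
  have hq := D.disjoint_forbidden_colorsAt_head e
  rw [StarCompatible, D.edgeColor_of_strandEdge hh e, D.edgeColor_of_pos_eq hpos.symm,
    D.colorsAt_rung_end (hpos.trans hv) hm]
  rw [hv] at hq ⊢
  exact ⟨hjoins.rung_ne.2, fun hmem hmem' =>
    Finset.disjoint_left.1 hq (hjoins.rung_forbidden hmem') hmem⟩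

theorem starCompatible_of_interior (hh : 2 ≤ h) (hp : (caterpillarHalin h s).Adj v p)
    (hq : (caterpillarHalin h s).Adj v q) (hpq : p ≠ q) (hv : pos v = m + 1) (hm : m < h) :
    StarCompatible D.edgeColor D.colorsAt v p q := by
  have htail {a w} (e : StrandEdge s a v w) : lane s v = a :=
    e.tail.lane_eq (by omega) (by omega)
  have hhead {a w} (e : StrandEdge s a w v) : lane s v = a :=
    e.head.lane_eq (by omega) (by omega)
  rcases strandEdge_or_pos_eq_of_adj hh hp with ⟨a, e⟩ | ⟨a, e⟩ | hpos <;>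
    rcases strandEdge_or_pos_eq_of_adj hh hq with ⟨a', e'⟩ | ⟨a', e'⟩ | hpos'
  · exact absurd (e.head_unique ((htail e).symm.trans (htail e') ▸ e')) hpq
  · exact (D.starCompatible_prev_next hh e' ((htail e).symm.trans (hhead e') ▸ e) hv hm).symm
  · exact D.starCompatible_next_rung hh e hq.ne hpos'.symm hv hm
  · exact D.starCompatible_prev_next hh e ((hhead e).symm.trans (htail e') ▸ e') hv hm
  · exact absurd (e.tail_unique ((hhead e).symm.trans (hhead e') ▸ e')) hpq
  · exact D.starCompatible_prev_rung hh e hq.ne hpos'.symm hv hm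
  · exact (D.starCompatible_next_rung hh e' hp.ne hpos.symm hv hm).symm
  · exact (D.starCompatible_prev_rung hh e' hp.ne hpos.symm hv hm).symm
  · obtain ⟨a', -, hrung⟩ := D.exists_joins hv hm
    have hlane := (hrung p hp.ne' hpos.symm).trans (hrung q hq.ne' hpos'.symm).symm
    exact absurd hlane (lane_ne_of_pos_eq hpq (hpos.symm.trans hpos'))

theorem starCompatible_of_adj (hh : 2 ≤ h) (hp : (caterpillarHalin h s).Adj v p)
    (hq : (caterpillarHalin h s).Adj v q) (hpq : p ≠ q) :
    StarCompatible D.edgeColor D.colorsAt v p q := by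
  rcases hv : pos v with _ | m
  · obtain ⟨a, e⟩ := strandEdge_of_pos_eq_zero hh hp hv
    obtain ⟨a', e'⟩ := strandEdge_of_pos_eq_zero hh hq hv
    exact D.starCompatible_of_tail hh e e' hv hpq
  rcases (pos_le v).lt_or_eq with hlt | heq
  · exact D.starCompatible_of_interior hh hp hq hpq hv (by omega)
  · obtain ⟨a, e⟩ := strandEdge_of_pos_eq_add_one hh hp heq
    obtain ⟨a', e'⟩ := strandEdge_of_pos_eq_add_one hh hq heq
    exact D.starCompatible_of_head hh e e' heq hpq

theorem isStarEdgeColoring_edgeColor (hh : 2 ≤ h) :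
    IsStarEdgeColoring (caterpillarHalin h s) 5 fun e => (D.edgeColor e).val :=
  isStarEdgeColoring_of_starCompatible (fun _ _ => D.edgeColor_mem_colorsAt hh)
    fun _ _ _ => D.starCompatible_of_adj hh

end Scheme

section Degree

variable {h : ℕ} {s : ℕ → Bool}

theorem extCycle_perm (hh : 2 ≤ h) : (extCycle h s).Perm (List.range (h + 2)) := by
  have hsides : (sideLeaves h s false ++ sideLeaves h s true).Perm (List.range' 1 h) := by
    simpa [sideLeaves] using
      List.filter_append_perm (fun i => decide (side h s i = false)) (List.range' 1 h)
  have hrange : List.range (h + 2) = 0 :: (List.range' 1 h ++ [h + 1]) := by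
    rw [List.range_eq_range', List.range'_succ, List.range'_1_concat, Nat.add_comm 1]
  rw [extCycle_eq hh, hrange, List.cons_append, List.cons_append, List.append_assoc]
  refine .cons 0 (.trans (.append_left _ ?_) (List.append_assoc .. ▸ hsides.append_right [h + 1]))
  exact List.perm_append_comm.trans ((List.reverse_perm _).append_right _)

theorem exists_adj_leaf (hh : 2 ≤ h) (j : Fin (h + 2)) : ∃ j₁ j₂ : Fin (h + 2), j₁ ≠ j₂ ∧
    (caterpillarHalin h s).Adj (.inr j) (.inr j₁) ∧
    (caterpillarHalin h s).Adj (.inr j) (.inr j₂) := by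
  have hperm := extCycle_perm (s := s) hh
  have hmem {i : ℕ} : i ∈ extCycle h s ↔ i < h + 2 := by rw [hperm.mem_iff, List.mem_range]
  obtain ⟨y, z, hy, hz, hxy, hxz, hyz⟩ := exists_mem_zip_rotate_one
    (hperm.nodup_iff.2 List.nodup_range) (by simp [hperm.length_eq]; omega) (hmem.2 j.isLt)
  have hy' := hmem.1 (List.mem_rotate.1 (List.of_mem_zip hy).2)
  have hz' := hmem.1 (List.of_mem_zip hz).1
  refine ⟨⟨y, hy'⟩, ⟨z, hz'⟩, by simpa using hyz, ?_, ?_⟩ <;>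
    rw [caterpillarHalin, SimpleGraph.fromRel_adj]
  · exact ⟨fun e => hxy (congrArg Fin.val (Sum.inr_injective e)), .inl hy⟩
  · exact ⟨fun e => hxz (congrArg Fin.val (Sum.inr_injective e)), .inr hz⟩

theorem adj_spine_leaf {i : Fin h} {j : Fin (h + 2)} :
    (caterpillarHalin h s).Adj (.inl i) (.inr j) ↔ (i.val = 0 ∧ (j.val = 0 ∨ j.val = 1)) ∨
      (i.val = h - 1 ∧ (j.val = h ∨ j.val = h + 1)) ∨
      (j.val = i.val + 1 ∧ 2 ≤ j.val ∧ j.val ≤ h - 1) := by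
  simp [caterpillarHalin, SimpleGraph.fromRel_adj, catRel]

theorem adj_spine_spine {i i' : Fin h} (hi : i'.val = i.val + 1) :
    (caterpillarHalin h s).Adj (.inl i) (.inl i') := by
  simp [caterpillarHalin, SimpleGraph.fromRel_adj, catRel, hi, Fin.ext_iff]

theorem exists_three_adj (hh : 2 ≤ h) (v : CatVert h) : ∃ w₁ w₂ w₃,
    ((caterpillarHalin h s).Adj v w₁ ∧ (caterpillarHalin h s).Adj v w₂ ∧
      (caterpillarHalin h s).Adj v w₃) ∧ w₁ ≠ w₂ ∧ w₁ ≠ w₃ ∧ w₂ ≠ w₃ := by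
  rcases v with i | j
  · obtain ⟨p, hp, hpi⟩ : ∃ p, (caterpillarHalin h s).Adj (.inl i) p ∧ pos p < i + 1 := by
      by_cases hi : i.val = 0
      · exact ⟨.inr 0, adj_spine_leaf.2 (by simp [hi]), by simp [pos]⟩
      · exact ⟨.inl ⟨i - 1, by omega⟩, (adj_spine_spine (by simp; omega)).symm,
          by simp [pos]; omega⟩
    obtain ⟨q, hq, hqi⟩ : ∃ q, (caterpillarHalin h s).Adj (.inl i) q ∧ i + 1 < pos q := by
      by_cases hi : i.val = h - 1
      · exact ⟨.inr (Fin.last _), adj_spine_leaf.2 (by simp [hi]), by simp [pos]⟩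
      · exact ⟨.inl ⟨i + 1, by omega⟩, adj_spine_spine rfl, by simp [pos]⟩
    have hr : (caterpillarHalin h s).Adj (.inl i) (.inr i.succ.castSucc) :=
      adj_spine_leaf.2 (by simp; omega)
    refine ⟨p, q, _, ⟨hp, hq, hr⟩, ?_, ?_, ?_⟩ <;> rintro rfl <;>
      simp only [pos, Fin.val_castSucc, Fin.val_succ] at hpi hqi <;> omega
  · obtain ⟨j₁, j₂, hne, h₁, h₂⟩ := exists_adj_leaf (s := s) hh j
    have hr : (caterpillarHalin h s).Adj (.inr j) (.inl ⟨min (j - 1) (h - 1), by omega⟩) :=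
      (adj_spine_leaf.2 (by dsimp only; omega)).symm
    exact ⟨_, _, _, ⟨h₁, h₂, hr⟩, by simpa using hne, by simp, by simp⟩

theorem exists_adj_ne_ne (hh : 2 ≤ h) (v a b : CatVert h) :
    ∃ w, (caterpillarHalin h s).Adj v w ∧ w ≠ a ∧ w ≠ b := by
  obtain ⟨w₁, w₂, w₃, ⟨h₁, h₂, h₃⟩, h₁₂, h₁₃, h₂₃⟩ := exists_three_adj (s := s) hh v
  have hcard : ({a, b} : Finset (CatVert h)).card < ({w₁, w₂, w₃} : Finset (CatVert h)).card := by
    rw [Finset.card_eq_three.2 ⟨w₁, w₂, w₃, h₁₂, h₁₃, h₂₃, rfl⟩]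
    exact Finset.card_le_two.trans_lt (by norm_num)
  obtain ⟨w, hw, hwab⟩ := Finset.exists_mem_notMem_of_card_lt_card hcard
  simp only [Finset.mem_insert, Finset.mem_singleton, not_or] at hw hwab
  exact ⟨w, by rcases hw with rfl | rfl | rfl <;> assumption, hwab⟩

theorem adj_leaf_zero_one : (caterpillarHalin h s).Adj (.inr 0) (.inr 1) := by
  have hlast {l : List ℕ} : (1, 0) ∈ (0 :: l ++ [1]).zip ((0 :: l ++ [1]).rotate 1) := by
    have hrotate : (0 :: l ++ [1]).rotate 1 = (l ++ [1]) ++ [0] := by simp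
    rw [hrotate, List.zip_append (by simp)]
    simp
  rw [caterpillarHalin, SimpleGraph.fromRel_adj]
  exact ⟨by simp, .inr hlast⟩

end Degree

theorem exists_isStarEdgeColoring_five {h : ℕ} (hh : 3 ≤ h) (s : ℕ → Bool) :
    ∃ c, IsStarEdgeColoring (caterpillarHalin h s) 5 c := by
  obtain ⟨D⟩ := exists_scheme hh (σ := side h s) (if_pos rfl)
  exact ⟨_, D.isStarEdgeColoring_edgeColor (by omega)⟩

theorem not_isStarEdgeColoring_four {h : ℕ} (hh : 2 ≤ h) (s : ℕ → Bool)
    (c : Sym2 (CatVert h) → ℕ) : ¬ IsStarEdgeColoring (caterpillarHalin h s) 4 c :=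
  not_isStarEdgeColoring_four_of_triangle (exists_adj_ne_ne hh) adj_leaf_zero_one
    (z := .inl ⟨0, by omega⟩) (adj_spine_leaf.2 (by simp)).symm (adj_spine_leaf.2 (by simp)).symm

end CaterpillarHalin

/-- For every `h ≥ 3` and every side assignment `s`, the caterpillar cubic Halin graph
`G(h, s)` has star chromatic index exactly 5: it admits a star 5-edge coloring but no
star 4-edge coloring. -/
theorem starChromaticIndex_caterpillarHalin (h : ℕ) (hh : 3 ≤ h) (s : ℕ → Bool) :
    (∃ c : Sym2 (CatVert h) → ℕ, IsStarEdgeColoring (caterpillarHalin h s) 5 c) ∧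
    ¬ ∃ c : Sym2 (CatVert h) → ℕ, IsStarEdgeColoring (caterpillarHalin h s) 4 c :=
  ⟨CaterpillarHalin.exists_isStarEdgeColoring_five hh s,
    fun ⟨c, hc⟩ => CaterpillarHalin.not_isStarEdgeColoring_four (by omega) s c hc⟩
end
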